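/- Suppose σ_n → ∞. Then for every 1 ≤ s < ∞ there is a constant C_s such that for every absolutely continuous function h : ℝ → ℝ with H_s(h) := ∫_ℝ |h′(x)| / (1 + |x|^s) dx < ∞ and every n, |E[h((S_n − E[S_n]) / σ_n)] − ∫ h dΦ| ≤ C_s H_s(h) σ_n^{−1}. -/

import Mathlib

open MeasureTheory ProbabilityTheory Filter
open scoped ENNReal NNReal

noncomputable section

variable {Ω : Type*} [MeasurableSpace Ω] {𝒳 : ℕ → Type*} [∀ j, MeasurableSpace (𝒳 j)]

/-- The σ-algebra generated by `X_0, …, X_j`. -/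
def pastSigma (X : ∀ j, Ω → 𝒳 j) (j : ℕ) : MeasurableSpace Ω :=
  ⨆ i ∈ Finset.range (j + 1), MeasurableSpace.comap (X i) inferInstance

/-- `X` is an inhomogeneous Markov chain (on the probability space `(Ω, μ)`) whose `n`-step
transition probabilities from time `j` are given by the Markov kernels `κ j n`: for every
measurable `Γ`, `ℙ(X_{j+n} ∈ Γ | X_0, …, X_j) = (κ j n) (X j) Γ` a.s. -/
structure IsInhomMarkov (μ : Measure Ω) (X : ∀ j, Ω → 𝒳 j)
    (κ : ∀ j n, Kernel (𝒳 j) (𝒳 (j + n))) : Prop where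
  meas : ∀ j, Measurable (X j)
  isMarkovKernel : ∀ j n, IsMarkovKernel (κ j n)
  cond : ∀ j n (Γ : Set (𝒳 (j + n))), MeasurableSet Γ →
    (μ[(fun ω => Γ.indicator (fun _ => (1 : ℝ)) (X (j + n) ω)) | pastSigma X j])
      =ᵐ[μ] fun ω => (κ j n (X j ω) Γ).toReal

/-- The standard normal distribution function `Φ`. -/
def stdNormalCDF (t : ℝ) : ℝ := (gaussianReal 0 1 (Set.Iic t)).toReal

/-!
The Doeblin condition makes the chain forget its past geometrically, in oscillation and in `L²`, so
Gordin's corrector turns `S n - E[S n]` into a sum of bounded martingale differences `ξ k` of the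
chain. For small complex `z`, normalised densities solving a backward recursion factorise
`E[exp (z ∑ ξ k)]` exactly into `n` numbers `1 + z² Var (ξ k) / 2 + error`, and the `L²` contraction
bounds the sum of the errors by `O(|z|³ Var (S n))`. Hence on the line `Re = 1`, up to height of
order `σ`, the Laplace transform of the standardised sum is within `O(1 / σ)` of the Gaussian one.
Esseen's smoothing inequality, applied to tails tilted by `exp x`, converts this into
`exp |x| |P(W > x) - P(Z > x)| = O(1 / σ)`, and the theorem follows from
`E[h W] - E[h Z] = ∫ h' x (P(W > x) - P(Z > x)) dx`, since `exp (-|x|)` beats any polynomial weight.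
-/

namespace DoeblinCLT

/-! ### Esseen's smoothing inequality -/

/-- The Fejér kernel `(sin (y / 2) / (y / 2)) ^ 2`, whose Fourier transform is supported in
`[-1, 1]`. -/
def fejerKernel (y : ℝ) : ℝ := Real.sinc (y / 2) ^ 2

lemma continuous_fejerKernel : Continuous fejerKernel := by
  unfold fejerKernel
  fun_prop

lemma fejerKernel_nonneg (y : ℝ) : 0 ≤ fejerKernel y := sq_nonneg _

lemma fejerKernel_neg (y : ℝ) : fejerKernel (-y) = fejerKernel y := by
  rw [fejerKernel, neg_div, Real.sinc_neg, fejerKernel]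

lemma mul_fejerKernel (y : ℝ) : y ^ 2 * fejerKernel y = 2 * (1 - Real.cos y) := by
  have hcos : Real.cos y = 1 - 2 * Real.sin (y / 2) ^ 2 := by
    rw [Real.sin_sq_eq_half_sub, mul_div_cancel₀ y two_ne_zero]
    ring
  rcases eq_or_ne y 0 with rfl | hy
  · simp
  · rw [hcos, fejerKernel, Real.sinc_of_ne_zero (by positivity)]
    field_simp
    ring

lemma fejerKernel_le (y : ℝ) : fejerKernel y ≤ 5 * (1 + y ^ 2)⁻¹ := by
  have hsinc : fejerKernel y ≤ 1 := (sq_le_one_iff_abs_le_one _).2 (Real.abs_sinc_le_one _)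
  rw [← div_eq_mul_inv, le_div_iff₀ (by positivity)]
  linarith [mul_fejerKernel y, Real.neg_one_le_cos y]

lemma integrable_fejerKernel : Integrable fejerKernel :=
  (integrable_inv_one_add_sq.const_mul 5).mono'
    continuous_fejerKernel.aestronglyMeasurable <|
    ae_of_all _ fun y => by
      simpa [abs_of_nonneg (fejerKernel_nonneg y)] using fejerKernel_le y

lemma integral_fejerKernel_pos : 0 < ∫ y, fejerKernel y :=
  integral_pos_of_integrable_nonneg_nonzero (x := 0) continuous_fejerKernel
    integrable_fejerKernel fejerKernel_nonneg (by simp [fejerKernel])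

lemma integral_one_sub_mul_cos (y : ℝ) :
    ∫ t in (0 : ℝ)..1, (1 - t) * (2 * Real.cos (t * y)) = fejerKernel y := by
  rcases eq_or_ne y 0 with rfl | hy
  · have hderiv (t : ℝ) : HasDerivAt (fun t : ℝ => 2 * t - t ^ 2) ((1 - t) * 2) t :=
      (((hasDerivAt_id t).const_mul 2).sub (hasDerivAt_pow 2 t)).congr_deriv (by simp; ring)
    simp only [mul_zero, Real.cos_zero, mul_one]
    rw [intervalIntegral.integral_eq_sub_of_hasDerivAt (fun t _ => hderiv t)
      (Continuous.intervalIntegrable (by fun_prop) _ _)]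
    norm_num [fejerKernel]
  · have hderiv (t : ℝ) : HasDerivAt
        (fun t => 2 * ((1 - t) * Real.sin (t * y) / y - Real.cos (t * y) / y ^ 2))
        ((1 - t) * (2 * Real.cos (t * y))) t := by
      have hlin : HasDerivAt (fun t : ℝ => t * y) y t := hasDerivAt_mul_const y
      refine ((((((hasDerivAt_id t).const_sub 1).mul hlin.sin).div_const y).sub
        (hlin.cos.div_const (y ^ 2))).const_mul 2).congr_deriv ?_
      simp only [id]
      field_simp
      ring
    rw [intervalIntegral.integral_eq_sub_of_hasDerivAt (fun t _ => hderiv t)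
      (Continuous.intervalIntegrable (by fun_prop) _ _)]
    have := mul_fejerKernel y
    field_simp
    simp
    linarith

lemma integral_one_sub_abs_mul_cexp (y : ℝ) :
    ∫ t in (-1 : ℝ)..1, ((1 - |t| : ℝ) : ℂ) * Complex.exp (t * y * Complex.I)
      = fejerKernel y := by
  have hcont : Continuous fun t : ℝ => ((1 - |t| : ℝ) : ℂ) * Complex.exp (t * y * Complex.I) := by
    fun_prop
  have hfold := intervalIntegral.integral_comp_neg (a := 0) (b := 1)
    fun t : ℝ => ((1 - |t| : ℝ) : ℂ) * Complex.exp (t * y * Complex.I)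
  rw [neg_zero] at hfold
  rw [← intervalIntegral.integral_add_adjacent_intervals (b := 0)
    (hcont.intervalIntegrable _ _) (hcont.intervalIntegrable _ _), ← hfold,
    ← intervalIntegral.integral_add (Continuous.intervalIntegrable (by fun_prop) _ _)
      (hcont.intervalIntegrable _ _), ← integral_one_sub_mul_cos,
    ← intervalIntegral.integral_ofReal]
  refine intervalIntegral.integral_congr fun t ht => ?_
  rw [Set.uIcc_of_le zero_le_one] at ht
  simp only [abs_neg, abs_of_nonneg ht.1]
  push_cast [Complex.cos]
  ring_nf

/-- The Fourier transform of `D` with angular frequency `t` and the sign convention of `charFun`. -/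
def angularFourier (D : ℝ → ℝ) (t : ℝ) : ℂ := ∫ u, (D u : ℂ) * Complex.exp (t * u * Complex.I)

lemma continuous_angularFourier {D : ℝ → ℝ} (hD : Integrable D) :
    Continuous (angularFourier D) := by
  refine continuous_of_dominated (bound := fun u => ‖D u‖) (fun t => ?_) (fun t => ?_) hD.norm ?_
  · exact hD.ofReal.aestronglyMeasurable.mul (Continuous.aestronglyMeasurable (by fun_prop))
  · exact ae_of_all _ fun u => by
      rw [norm_mul, ← Complex.ofReal_mul, Complex.norm_exp_ofReal_mul_I]
      simp
  · exact ae_of_all _ fun u => by fun_prop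

lemma angularFourier_comp_div {T : ℝ} (hT : 0 < T) (D : ℝ → ℝ) (t : ℝ) :
    angularFourier (fun u => D (u / T)) t = T * angularFourier D (t * T) := by
  have := Measure.integral_comp_div
    (fun u : ℝ => (D u : ℂ) * Complex.exp ((t * T : ℝ) * u * Complex.I)) T
  rw [abs_of_pos hT, Complex.real_smul] at this
  rw [angularFourier, angularFourier, ← this]
  congr 1 with u
  push_cast
  have : (T : ℂ) ≠ 0 := by exact_mod_cast hT.ne'
  field_simp

lemma integral_mul_fejerKernel_eq {D : ℝ → ℝ} (hD : Integrable D) (x : ℝ) :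
    ((∫ y, D (x - y) * fejerKernel y : ℝ) : ℂ)
      = ∫ t in (-1 : ℝ)..1,
        ((1 - |t| : ℝ) : ℂ) * Complex.exp (-(t * x * Complex.I)) * angularFourier D t := by
  have hflip := VectorFourier.integral_fourierIntegral_smul_eq_flip (μ := volume.restrict
      (Set.Ioc (-1 : ℝ) 1)) (ν := volume) (L := -LinearMap.mul ℝ ℝ)
    (f := fun t : ℝ => ((1 - |t| : ℝ) : ℂ) * Complex.exp (-(t * x * Complex.I)))
    (g := fun u => (D u : ℂ)) Real.continuous_probChar (by fun_prop)
    (Continuous.integrableOn_Ioc (by fun_prop)) hD.ofReal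
  simp only [VectorFourier.fourierIntegral_probChar, LinearMap.neg_apply, LinearMap.mul_apply',
    LinearMap.flip_apply, Complex.ofReal_neg, neg_neg, smul_eq_mul, Complex.ofReal_mul] at hflip
  rw [intervalIntegral.integral_of_le (by norm_num)]
  refine Eq.trans ?_ (hflip.trans ?_)
  · rw [← integral_sub_left_eq_self _ volume x, ← integral_complex_ofReal]
    refine integral_congr_ae (ae_of_all _ fun u => ?_)
    simp only [sub_sub_cancel]
    rw [mul_comm, Complex.ofReal_mul, ← fejerKernel_neg,
      ← integral_one_sub_abs_mul_cexp, intervalIntegral.integral_of_le (by norm_num)]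
    congr 2 with t
    rw [mul_left_comm, ← Complex.exp_add]
    push_cast
    ring_nf
  · simp only [angularFourier, mul_comm (Complex.exp _) (Complex.ofReal _)]

lemma abs_integral_mul_fejerKernel_le {D : ℝ → ℝ} (hD : Integrable D) (x : ℝ) :
    |∫ y, D (x - y) * fejerKernel y| ≤ ∫ t in (-1 : ℝ)..1, ‖angularFourier D t‖ := by
  rw [← Real.norm_eq_abs, ← Complex.norm_real, integral_mul_fejerKernel_eq hD]
  refine intervalIntegral.norm_integral_le_of_norm_le (by norm_num)
    (ae_of_all _ fun t ht => ?_) ((continuous_angularFourier hD).norm.intervalIntegrable _ _)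
  have hphase : ‖Complex.exp (-(t * x * Complex.I))‖ = 1 := by
    rw [← neg_mul, ← Complex.ofReal_mul, ← Complex.ofReal_neg, Complex.norm_exp_ofReal_mul_I]
  have habs : |t| ≤ 1 := abs_le.2 ⟨ht.1.le, ht.2⟩
  have hweight : ‖1 - |t|‖ ≤ 1 := abs_le.2 ⟨by linarith, by linarith [abs_nonneg t]⟩
  rw [norm_mul, norm_mul, hphase, mul_one, Complex.norm_real]
  exact mul_le_of_le_one_left (norm_nonneg _) hweight

lemma exists_setIntegral_compl_Icc_lt {K : ℝ → ℝ} (hK : Integrable K) (hpos : 0 < ∫ y, K y) :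
    ∃ a : ℝ, 0 < a ∧ ∫ y in (Set.Icc (-a) a)ᶜ, K y < ∫ y in Set.Icc (-a) a, K y := by
  have hlim := intervalIntegral_tendsto_integral hK tendsto_neg_atTop_atBot tendsto_id
  obtain ⟨a, hinner, ha⟩ := ((hlim.eventually (lt_mem_nhds (half_lt_self hpos))).and
    (eventually_gt_atTop 0)).exists
  have hsum := integral_add_compl (s := Set.Icc (-a) a) measurableSet_Icc hK
  rw [id, intervalIntegral.integral_of_le (by linarith), ← integral_Icc_eq_integral_Ioc] at hinner
  exact ⟨a, ha, by linarith⟩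

/- Averaged against `K` around `x - a`, a function that cannot increase fast stays close to `D x` on
`[-a, a]`, while outside of it only its sup norm `η` matters. -/
lemma mul_setIntegral_le_of_le_add_mul {D K : ℝ → ℝ} {L η a : ℝ} (hL : 0 ≤ L)
    (hD : AEStronglyMeasurable D) (hη : ∀ y, |D y| ≤ η)
    (hup : ∀ y δ, 0 ≤ δ → D (y + δ) ≤ D y + L * δ) (hK : Integrable K) (hK0 : ∀ y, 0 ≤ K y)
    (x : ℝ) :
    D x * ∫ y in Set.Icc (-a) a, K y ≤ (∫ y, D (x - a - y) * K y)
      + 2 * a * L * (∫ y in Set.Icc (-a) a, K y) + η * ∫ y in (Set.Icc (-a) a)ᶜ, K y := by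
  have hint : Integrable fun y => D (x - a - y) * K y :=
    hK.bdd_mul (c := η)
      (hD.comp_quasiMeasurePreserving (quasiMeasurePreserving_sub_left volume (x - a)))
      (ae_of_all _ fun y => hη _)
  have hinner : (D x - 2 * a * L) * ∫ y in Set.Icc (-a) a, K y
      ≤ ∫ y in Set.Icc (-a) a, D (x - a - y) * K y := by
    rw [← integral_const_mul]
    refine setIntegral_mono_on (hK.const_mul _).integrableOn hint.integrableOn measurableSet_Icc
      fun y hy => mul_le_mul_of_nonneg_right ?_ (hK0 y)
    have hstep := hup (x - a - y) (a + y) (by linarith [hy.1])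
    rw [sub_add_add_cancel, sub_add_cancel] at hstep
    have := mul_le_mul_of_nonneg_left (add_le_add_right hy.2 a) hL
    linarith
  have houter : -(η * ∫ y in (Set.Icc (-a) a)ᶜ, K y)
      ≤ ∫ y in (Set.Icc (-a) a)ᶜ, D (x - a - y) * K y := by
    rw [← integral_const_mul, ← integral_neg]
    refine integral_mono (hK.const_mul _).neg.integrableOn hint.integrableOn fun y => ?_
    simpa using mul_le_mul_of_nonneg_right (neg_le_of_abs_le (hη (x - a - y))) (hK0 y)
  have hsplit := integral_add_compl (s := Set.Icc (-a) a) measurableSet_Icc hint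
  linarith


lemma abs_mul_setIntegral_le_of_le_add_mul {D K : ℝ → ℝ} {L η a Δ : ℝ} (hL : 0 ≤ L)
    (hD : AEStronglyMeasurable D) (hη : ∀ y, |D y| ≤ η)
    (hup : ∀ y δ, 0 ≤ δ → D (y + δ) ≤ D y + L * δ) (hK : Integrable K) (hK0 : ∀ y, 0 ≤ K y)
    (hKneg : ∀ y, K (-y) = K y) (hΔ : ∀ x, |∫ y, D (x - y) * K y| ≤ Δ) (x : ℝ) :
    |D x| * ∫ y in Set.Icc (-a) a, K y
      ≤ Δ + 2 * a * L * (∫ y in Set.Icc (-a) a, K y) + η * ∫ y in (Set.Icc (-a) a)ᶜ, K y := by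
  rcases le_total 0 (D x) with hx | hx
  · rw [abs_of_nonneg hx]
    have := mul_setIntegral_le_of_le_add_mul (a := a) hL hD hη hup hK hK0 x
    linarith [le_of_abs_le (hΔ (x - a))]
  · rw [abs_of_nonpos hx]
    have hreflect : ∫ y, -D (-(-x - a - y)) * K y = -∫ y, D (x + a - y) * K y := by
      rw [← integral_neg_eq_self, ← integral_neg]
      refine integral_congr_ae (ae_of_all _ fun y => ?_)
      simp only [hKneg]
      ring_nf
    have := mul_setIntegral_le_of_le_add_mul (D := fun y => -D (-y)) (a := a) hL
      (hD.comp_quasiMeasurePreserving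
        (Measure.measurePreserving_neg volume).quasiMeasurePreserving).neg
      (fun y => by simpa using hη (-y))
      (fun y δ hδ => by
        have := hup (-(y + δ)) δ hδ
        rw [neg_add, neg_add_cancel_right] at this
        rw [neg_add]
        linarith) hK hK0 (-x)
    rw [hreflect, neg_neg] at this
    linarith [neg_le_of_abs_le (hΔ (x + a))]

lemma exists_abs_le_integral_norm_angularFourier :
    ∃ C₀ : ℝ, 0 ≤ C₀ ∧ ∀ (D : ℝ → ℝ) (L : ℝ), 0 ≤ L → Integrable D →
      BddAbove (Set.range fun y => |D y|) → (∀ y δ, 0 ≤ δ → D (y + δ) ≤ D y + L * δ) →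
      ∀ x, |D x| ≤ C₀ * ((∫ t in (-1 : ℝ)..1, ‖angularFourier D t‖) + L) := by
  obtain ⟨a, ha, hlt⟩ :=
    exists_setIntegral_compl_Icc_lt integrable_fejerKernel integral_fejerKernel_pos
  set inner := ∫ y in Set.Icc (-a) a, fejerKernel y
  set outer := ∫ y in (Set.Icc (-a) a)ᶜ, fejerKernel y
  have houter : 0 ≤ outer := integral_nonneg fejerKernel_nonneg
  have hinner : 0 < inner := houter.trans_lt hlt
  have hgap : 0 < inner - outer := sub_pos.2 hlt
  refine ⟨(1 + 2 * a * inner) / (inner - outer), by positivity,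
    fun D L hL hD hbdd hup x => ?_⟩
  set Δ := ∫ t in (-1 : ℝ)..1, ‖angularFourier D t‖
  set η := ⨆ y, |D y|
  have hΔ : 0 ≤ Δ := intervalIntegral.integral_nonneg (by norm_num) fun t _ => norm_nonneg _
  have hkey (y : ℝ) : |D y| * inner ≤ Δ + 2 * a * L * inner + η * outer :=
    abs_mul_setIntegral_le_of_le_add_mul hL hD.aestronglyMeasurable (le_ciSup hbdd) hup
      integrable_fejerKernel fejerKernel_nonneg fejerKernel_neg
      (abs_integral_mul_fejerKernel_le hD) y
  have hη : η * inner ≤ Δ + 2 * a * L * inner + η * outer :=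
    (le_div_iff₀ hinner).1 (ciSup_le fun y => (le_div_iff₀ hinner).2 (hkey y))
  refine (le_ciSup hbdd x).trans ?_
  rw [div_mul_eq_mul_div, le_div_iff₀ hgap]
  linarith [mul_nonneg (mul_nonneg ha.le hinner.le) hΔ]

theorem exists_abs_le_integral_norm_angularFourier_add_div :
    ∃ C₀ : ℝ, 0 ≤ C₀ ∧ ∀ (D : ℝ → ℝ) (L T : ℝ), 0 ≤ L → 0 < T → Integrable D →
      BddAbove (Set.range fun y => |D y|) → (∀ y δ, 0 ≤ δ → D (y + δ) ≤ D y + L * δ) →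
      ∀ x, |D x| ≤ C₀ * ((∫ t in -T..T, ‖angularFourier D t‖) + L / T) := by
  obtain ⟨C₀, hC₀, hsmooth⟩ := exists_abs_le_integral_norm_angularFourier
  refine ⟨C₀, hC₀, fun D L T hL hT hD hbdd hup x => ?_⟩
  have hscaled := hsmooth (fun u => D (u / T)) (L / T) (by positivity) (hD.comp_div hT.ne')
    (hbdd.mono (Set.range_comp_subset_range (· / T) fun y => |D y|))
    (fun y δ hδ => by
      rw [add_div, div_mul_eq_mul_div, mul_div_assoc]
      exact hup (y / T) (δ / T) (by positivity)) (x * T)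
  have hrescale : ∫ t in (-1 : ℝ)..1, ‖angularFourier (fun u => D (u / T)) t‖
      = ∫ t in -T..T, ‖angularFourier D t‖ := by
    simp only [angularFourier_comp_div hT, norm_mul, Complex.norm_real, Real.norm_of_nonneg hT.le]
    rw [intervalIntegral.integral_const_mul,
      intervalIntegral.mul_integral_comp_mul_right (f := fun t => ‖angularFourier D t‖),
      neg_one_mul, one_mul]
  rwa [hrescale, mul_div_cancel_right₀ x hT.ne'] at hscaled

/-! ### Exponentially tilted tails -/

section TiltedTail

variable {ν : Measure ℝ}

lemma integral_indicator_Iio_eq_smul {E : Type*} [NormedAddCommGroup E] [NormedSpace ℝ E]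
    [CompleteSpace E] (ν : Measure ℝ) (g : ℝ → E) (x : ℝ) :
    ∫ w, (Set.Iio w).indicator g x ∂ν = ν.real (Set.Ioi x) • g x := by
  rw [← setIntegral_const, ← integral_indicator measurableSet_Ioi]
  rfl

lemma integrable_indicator_Iio_prod {E : Type*} [NormedAddCommGroup E] [SFinite ν] {g : ℝ → E}
    (hg : AEStronglyMeasurable g) (hIio : ∀ w, IntegrableOn g (Set.Iio w))
    (hint : Integrable (fun w => ∫ x in Set.Iio w, ‖g x‖) ν) :
    Integrable (fun p : ℝ × ℝ => (Set.Iio p.2).indicator g p.1) (volume.prod ν) := by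
  have hmeas : AEStronglyMeasurable (fun p : ℝ × ℝ => (Set.Iio p.2).indicator g p.1)
      (volume.prod ν) :=
    hg.comp_fst.indicator (measurableSet_lt measurable_fst measurable_snd)
  refine (integrable_prod_iff' hmeas).2
    ⟨ae_of_all _ fun w => (integrable_indicator_iff measurableSet_Iio).2 (hIio w), ?_⟩
  simpa only [norm_indicator_eq_indicator_norm, integral_indicator measurableSet_Iio] using hint

lemma integrable_indicator_Iio_cexp_prod [SFinite ν] (hν : Integrable Real.exp ν) (t : ℝ) :
    Integrable (fun p : ℝ × ℝ =>
      (Set.Iio p.2).indicator (fun x : ℝ => Complex.exp ((1 + t * Complex.I) * x)) p.1)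
      (volume.prod ν) := by
  refine integrable_indicator_Iio_prod (Continuous.aestronglyMeasurable (by fun_prop))
    (fun w => (integrableOn_exp_mul_complex_Iic (by simp) w).mono_set Set.Iio_subset_Iic_self) ?_
  simpa [Complex.norm_exp, ← integral_Iic_eq_integral_Iio, integral_exp_Iic] using hν

/-- The tail of `ν`, tilted by `Real.exp`: this makes it integrable and vanish at `-∞`, without
changing its order of magnitude at bounded points. -/
def expTail (ν : Measure ℝ) (x : ℝ) : ℝ := Real.exp x * ν.real (Set.Ioi x)

lemma expTail_nonneg (ν : Measure ℝ) (x : ℝ) : 0 ≤ expTail ν x := by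
  unfold expTail
  positivity

lemma expTail_le [IsFiniteMeasure ν] (hν : Integrable Real.exp ν) (x : ℝ) :
    expTail ν x ≤ ∫ w, Real.exp w ∂ν := by
  have hchernoff := measure_ge_le_exp_mul_mgf (X := id) x zero_le_one (by simpa using hν)
  simp only [mgf, id, one_mul, neg_mul] at hchernoff
  calc expTail ν x ≤ Real.exp x * (Real.exp (-x) * ∫ w, Real.exp w ∂ν) := by
        unfold expTail
        gcongr
        exact (measureReal_mono Set.Ioi_subset_Ici_self).trans hchernoff
    _ = ∫ w, Real.exp w ∂ν := by rw [← mul_assoc, ← Real.exp_add, add_neg_cancel,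
        Real.exp_zero, one_mul]

lemma expTail_smul_cexp (ν : Measure ℝ) (t x : ℝ) :
    (expTail ν x : ℂ) * Complex.exp (t * x * Complex.I)
      = ν.real (Set.Ioi x) • Complex.exp ((1 + t * Complex.I) * x) := by
  rw [expTail, Complex.real_smul, add_mul, Complex.exp_add]
  push_cast
  ring_nf

lemma integrable_expTail [SFinite ν] (hν : Integrable Real.exp ν) : Integrable (expTail ν) := by
  have hslice := (integrable_indicator_Iio_cexp_prod hν 0).integral_prod_left
  simp only [integral_indicator_Iio_eq_smul, ← expTail_smul_cexp] at hslice
  simpa using hslice.re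

lemma angularFourier_expTail [SFinite ν] (hν : Integrable Real.exp ν) (t : ℝ) :
    angularFourier (expTail ν) t
      = complexMGF id ν (1 + t * Complex.I) / (1 + t * Complex.I) := by
  have hswap := integral_integral_swap (f := fun x w : ℝ => (Set.Iio w).indicator
    (fun x : ℝ => Complex.exp ((1 + t * Complex.I) * x)) x)
    (integrable_indicator_Iio_cexp_prod hν t)
  simp only [integral_indicator_Iio_eq_smul, ← expTail_smul_cexp] at hswap
  rw [angularFourier, hswap, complexMGF, ← integral_div]
  congr 1 with w
  rw [integral_indicator measurableSet_Iio, ← integral_Iic_eq_integral_Iio,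
    integral_exp_mul_complex_Iic (by simp), id]

lemma angularFourier_sub {D₁ D₂ : ℝ → ℝ} (h₁ : Integrable D₁) (h₂ : Integrable D₂) (t : ℝ) :
    angularFourier (fun u => D₁ u - D₂ u) t = angularFourier D₁ t - angularFourier D₂ t := by
  have hint {D : ℝ → ℝ} (hD : Integrable D) :
      Integrable fun u : ℝ => (D u : ℂ) * Complex.exp (t * u * Complex.I) :=
    hD.ofReal.mul_bdd (c := 1) (Continuous.aestronglyMeasurable (by fun_prop))
      (ae_of_all _ fun u => by rw [← Complex.ofReal_mul, Complex.norm_exp_ofReal_mul_I])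
  simp only [angularFourier, Complex.ofReal_sub, sub_mul]
  exact integral_sub (hint h₁) (hint h₂)

lemma expTail_add_le [IsFiniteMeasure ν] (hν : Integrable Real.exp ν) (y : ℝ) {δ : ℝ}
    (hδ : 0 ≤ δ) : expTail ν (y + δ) ≤ expTail ν y + 2 * (∫ w, Real.exp w ∂ν) * δ := by
  have hy := expTail_nonneg ν y
  rcases le_total δ 1 with hδ1 | hδ1
  · have hgrowth : expTail ν (y + δ) ≤ Real.exp δ * expTail ν y := by
      calc expTail ν (y + δ) ≤ Real.exp (y + δ) * ν.real (Set.Ioi y) := by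
            unfold expTail
            exact mul_le_mul_of_nonneg_left
              (measureReal_mono (Set.Ioi_subset_Ioi (by linarith))) (Real.exp_pos _).le
        _ = Real.exp δ * expTail ν y := by rw [expTail, Real.exp_add]; ring
    have hexp : Real.exp δ - 1 ≤ 2 * δ := by
      have := Real.abs_exp_sub_one_le (x := δ) (by rwa [abs_of_nonneg hδ])
      rw [abs_of_nonneg hδ] at this
      exact le_of_abs_le this
    linarith [mul_le_mul hexp (expTail_le hν y) hy (by positivity)]
  · have hle := expTail_le hν (y + δ)
    have hM := (expTail_nonneg ν (y + δ)).trans hle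
    linarith [mul_le_mul_of_nonneg_left hδ1 hM, mul_nonneg hM hδ]

lemma gaussianPDFReal_le_exp_one_sub (x : ℝ) : gaussianPDFReal 0 1 x ≤ Real.exp (1 - x) := by
  have hnorm : (√(2 * Real.pi * (1 : ℝ≥0)))⁻¹ ≤ 1 := by
    refine inv_le_one_of_one_le₀ (Real.one_le_sqrt.2 ?_)
    push_cast
    linarith [Real.pi_gt_three]
  rw [gaussianPDFReal]
  refine (mul_le_of_le_one_left (Real.exp_pos _).le hnorm).trans (Real.exp_le_exp.2 ?_)
  push_cast
  rw [sub_zero]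
  linarith [sq_nonneg (x - 1), sub_sq x 1]

lemma gaussianReal_real_Ioc_le (y : ℝ) {δ : ℝ} (hδ : 0 ≤ δ) :
    (gaussianReal 0 1).real (Set.Ioc y (y + δ)) ≤ Real.exp (1 - y) * δ := by
  rw [Measure.real, gaussianReal_apply_eq_integral 0 one_ne_zero, ENNReal.toReal_ofReal
    (setIntegral_nonneg measurableSet_Ioc fun x _ => gaussianPDFReal_nonneg 0 1 x)]
  calc ∫ x in Set.Ioc y (y + δ), gaussianPDFReal 0 1 x
      ≤ ∫ _x in Set.Ioc y (y + δ), Real.exp (1 - y) := by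
        refine setIntegral_mono_on (integrable_gaussianPDFReal 0 1).integrableOn (by simp)
          measurableSet_Ioc fun x hx => (gaussianPDFReal_le_exp_one_sub x).trans ?_
        gcongr
        exact hx.1.le
    _ = Real.exp (1 - y) * δ := by simp [hδ, mul_comm]

lemma expTail_gaussianReal_le (y : ℝ) {δ : ℝ} (hδ : 0 ≤ δ) :
    expTail (gaussianReal 0 1) y
      ≤ expTail (gaussianReal 0 1) (y + δ) + Real.exp 1 * δ := by
  have hsplit : (gaussianReal 0 1).real (Set.Ioi y)
      = (gaussianReal 0 1).real (Set.Ioc y (y + δ))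
        + (gaussianReal 0 1).real (Set.Ioi (y + δ)) := by
    rw [← measureReal_union (Set.Ioc_disjoint_Ioi le_rfl) measurableSet_Ioi,
      Set.Ioc_union_Ioi_eq_Ioi (by linarith)]
  calc expTail (gaussianReal 0 1) y
      ≤ Real.exp y * (Real.exp (1 - y) * δ)
        + Real.exp y * (gaussianReal 0 1).real (Set.Ioi (y + δ)) := by
        rw [expTail, hsplit, mul_add]
        gcongr
        exact gaussianReal_real_Ioc_le y hδ
    _ ≤ Real.exp 1 * δ + expTail (gaussianReal 0 1) (y + δ) := by
        rw [← mul_assoc, ← Real.exp_add, add_sub_cancel, expTail]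
        gcongr
        linarith
    _ = _ := add_comm _ _

lemma integrable_exp_gaussianReal : Integrable Real.exp (gaussianReal 0 1) := by
  simpa using integrable_exp_mul_gaussianReal (μ := 0) (v := 1) 1

lemma angularFourier_expTail_sub_mul [SFinite ν] (hν : Integrable Real.exp ν) (t : ℝ) :
    angularFourier (fun u => expTail ν u - expTail (gaussianReal 0 1) u) t * (1 + t * Complex.I)
      = complexMGF id ν (1 + t * Complex.I) - Complex.exp ((1 + t * Complex.I) ^ 2 / 2) := by
  have hne : (1 + t * Complex.I : ℂ) ≠ 0 := fun h => by simpa using congrArg Complex.re h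
  rw [angularFourier_sub (integrable_expTail hν) (integrable_expTail integrable_exp_gaussianReal),
    angularFourier_expTail hν, angularFourier_expTail integrable_exp_gaussianReal,
    complexMGF_id_gaussianReal, ← sub_div, div_mul_cancel₀ _ hne]
  simp

theorem exists_exp_mul_abs_measureReal_Ioi_sub_le :
    ∃ C₀ : ℝ, 0 ≤ C₀ ∧ ∀ (ν : Measure ℝ) [IsFiniteMeasure ν] (T : ℝ),
      Integrable Real.exp ν → 0 < T → ∀ x,
      Real.exp x * |ν.real (Set.Ioi x) - (gaussianReal 0 1).real (Set.Ioi x)|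
        ≤ C₀ * ((∫ t in -T..T, ‖complexMGF id ν (1 + t * Complex.I)
            - Complex.exp ((1 + t * Complex.I) ^ 2 / 2)‖)
          + (2 * (∫ w, Real.exp w ∂ν) + Real.exp 1) / T) := by
  obtain ⟨C₀, hC₀, hsmooth⟩ := exists_abs_le_integral_norm_angularFourier_add_div
  refine ⟨C₀, hC₀, fun ν _ T hν hT x => ?_⟩
  set D : ℝ → ℝ := fun u => expTail ν u - expTail (gaussianReal 0 1) u
  have hDint : Integrable D :=
    (integrable_expTail hν).sub (integrable_expTail integrable_exp_gaussianReal)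
  have hDbdd : BddAbove (Set.range fun y => |D y|) :=
    ⟨_, Set.forall_mem_range.2 fun y => abs_sub_le_of_nonneg_of_le (expTail_nonneg ν y)
      ((expTail_le hν y).trans (le_max_left _ _)) (expTail_nonneg _ y)
      ((expTail_le integrable_exp_gaussianReal y).trans (le_max_right _ _))⟩
  have hDup (y δ : ℝ) (hδ : 0 ≤ δ) :
      D (y + δ) ≤ D y + (2 * (∫ w, Real.exp w ∂ν) + Real.exp 1) * δ := by
    linarith [expTail_add_le hν y hδ, expTail_gaussianReal_le y hδ]
  have hDfourier := continuous_angularFourier hDint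
  rw [← abs_of_pos (Real.exp_pos x), ← abs_mul, mul_sub]
  refine (hsmooth D _ T (by positivity) hT hDint hDbdd hDup x).trans ?_
  gcongr
  simp only [← angularFourier_expTail_sub_mul hν, norm_mul]
  refine intervalIntegral.integral_mono (by linarith) (hDfourier.norm.intervalIntegrable _ _)
    (Continuous.intervalIntegrable (by fun_prop) _ _) fun t =>
      le_mul_of_one_le_right (norm_nonneg _) ?_
  simpa using Complex.abs_re_le_norm (1 + t * Complex.I)

end TiltedTail

/-! ### Integrals of absolutely continuous functions -/

section LayerCake

variable {ν ν' : Measure ℝ} {h h' : ℝ → ℝ}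

/-- The kernel of the layer cake formula `h w - h 0 = ∫ x, h' x * layerKernel x w`. For fixed `x` it
has constant sign in `w`. -/
def layerKernel (x w : ℝ) : ℝ := (Set.Ioi x).indicator 1 w - (Set.Ioi x).indicator 1 0

lemma layerKernel_of_nonneg {x : ℝ} (hx : 0 ≤ x) (w : ℝ) :
    layerKernel x w = (Set.Ioi x).indicator 1 w := by
  simp [layerKernel, hx]

lemma layerKernel_of_neg {x : ℝ} (hx : x < 0) (w : ℝ) :
    layerKernel x w = -(Set.Iic x).indicator 1 w := by
  rw [layerKernel, Set.indicator_of_mem (Set.mem_Ioi.2 hx), ← Set.compl_Iic,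
    Set.indicator_compl]
  simp

lemma measurable_uncurry_layerKernel : Measurable (Function.uncurry layerKernel) :=
  (measurable_one.indicator (measurableSet_lt measurable_fst measurable_snd)).sub
    ((measurable_one.indicator measurableSet_Iio).comp measurable_fst :
      Measurable fun p : ℝ × ℝ => (Set.Iio (0 : ℝ)).indicator (1 : ℝ → ℝ) p.1)

lemma integrable_layerKernel [IsFiniteMeasure ν] (x : ℝ) : Integrable (layerKernel x) ν :=
  ((integrable_const 1).indicator measurableSet_Ioi).sub (integrable_const _)

lemma integral_layerKernel [IsProbabilityMeasure ν] (x : ℝ) :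
    ∫ w, layerKernel x w ∂ν = ν.real (Set.Ioi x) - (Set.Ioi x).indicator 1 0 := by
  simp only [layerKernel]
  rw [integral_sub ((integrable_const 1).indicator measurableSet_Ioi) (integrable_const _),
    integral_indicator_one measurableSet_Ioi]
  simp

lemma integral_abs_layerKernel (ν : Measure ℝ) (x : ℝ) :
    ∫ w, |layerKernel x w| ∂ν = |∫ w, layerKernel x w ∂ν| := by
  rcases le_or_gt 0 x with hx | hx
  · have hnonneg (w : ℝ) : 0 ≤ layerKernel x w := by
      rw [layerKernel_of_nonneg hx]
      exact Set.indicator_nonneg (fun _ _ => zero_le_one) w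
    rw [abs_of_nonneg (integral_nonneg (f := layerKernel x) hnonneg)]
    simp only [abs_of_nonneg (hnonneg _)]
  · have hnonpos (w : ℝ) : layerKernel x w ≤ 0 := by
      rw [layerKernel_of_neg hx, Left.neg_nonpos_iff]
      exact Set.indicator_nonneg (fun _ _ => zero_le_one) w
    rw [abs_of_nonpos (integral_nonpos (f := layerKernel x) hnonpos)]
    simp only [abs_of_nonpos (hnonpos _), integral_neg]

lemma integral_mul_layerKernel (h' : ℝ → ℝ) (w : ℝ) :
    ∫ x, h' x * layerKernel x w = ∫ x in (0 : ℝ)..w, h' x := by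
  rcases le_total 0 w with hw | hw
  · have hker (x : ℝ) : h' x * layerKernel x w = (Set.Ico 0 w).indicator h' x := by
      rcases le_or_gt 0 x with hx | hx
      · rw [layerKernel_of_nonneg hx]
        simp [Set.indicator_apply, hx]
      · rw [layerKernel_of_neg hx]
        simp [hx.not_ge, hx.trans_le hw]
    simp only [hker]
    rw [integral_indicator measurableSet_Ico, integral_Ico_eq_integral_Ioc,
      intervalIntegral.integral_of_le hw]
  · have hker (x : ℝ) : h' x * layerKernel x w = -(Set.Ico w 0).indicator h' x := by
      rcases le_or_gt 0 x with hx | hx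
      · rw [layerKernel_of_nonneg hx]
        simp [hx.not_gt, hw.trans hx]
      · rw [layerKernel_of_neg hx]
        simp [Set.indicator_apply, hx]
    simp only [hker]
    rw [integral_neg, integral_indicator measurableSet_Ico, integral_Ico_eq_integral_Ioc,
      intervalIntegral.integral_of_ge hw]

lemma integrable_mul_layerKernel_prod [IsProbabilityMeasure ν] (hh' : AEStronglyMeasurable h')
    (hint : Integrable fun x => h' x * (ν.real (Set.Ioi x) - (Set.Ioi x).indicator 1 0)) :
    Integrable (Function.uncurry fun x w => h' x * layerKernel x w) (volume.prod ν) := by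
  refine (integrable_prod_iff
    (hh'.comp_fst.mul measurable_uncurry_layerKernel.aestronglyMeasurable)).2
    ⟨ae_of_all _ fun x => (integrable_layerKernel x).const_mul (h' x), ?_⟩
  simpa only [Pi.mul_apply, Function.uncurry, norm_mul, integral_const_mul, Real.norm_eq_abs,
    integral_abs_layerKernel, integral_layerKernel] using hint.norm

lemma integral_eq_add_integral_mul_measureReal_Ioi [IsProbabilityMeasure ν]
    (hh' : AEStronglyMeasurable h') (hFTC : ∀ y, h y - h 0 = ∫ x in (0 : ℝ)..y, h' x)
    (hint : Integrable fun x => h' x * (ν.real (Set.Ioi x) - (Set.Ioi x).indicator 1 0)) :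
    ∫ w, h w ∂ν = h 0 + ∫ x, h' x * (ν.real (Set.Ioi x) - (Set.Ioi x).indicator 1 0) := by
  have hprod := integrable_mul_layerKernel_prod hh' hint
  have hsub : Integrable (fun w => h w - h 0) ν := by
    simpa only [Function.uncurry, integral_mul_layerKernel, ← hFTC] using hprod.integral_prod_right
  have hswap := integral_integral_swap hprod
  simp only [integral_const_mul, integral_layerKernel, integral_mul_layerKernel, ← hFTC] at hswap
  have hh : ∫ w, h w ∂ν = ∫ w, (h w - h 0) + h 0 ∂ν := by simp
  rw [hswap, hh, integral_add hsub (integrable_const _), integral_const, probReal_univ, one_smul,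
    add_comm]

lemma abs_measureReal_Ioi_sub_indicator_le [IsProbabilityMeasure ν]
    (hν : Integrable (fun w => Real.exp |w|) ν) (x : ℝ) :
    |ν.real (Set.Ioi x) - (Set.Ioi x).indicator 1 0|
      ≤ Real.exp (-|x|) * ∫ w, Real.exp |w| ∂ν := by
  have hchernoff := measure_ge_le_exp_mul_mgf (X := fun w : ℝ => |w|) |x| zero_le_one
    (by simpa using hν)
  simp only [mgf, one_mul, neg_mul] at hchernoff
  refine le_trans ?_ hchernoff
  rcases le_or_gt 0 x with hx | hx
  · rw [Set.indicator_of_notMem (by simpa using hx), sub_zero, abs_of_nonneg measureReal_nonneg,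
      abs_of_nonneg hx]
    exact measureReal_mono fun w hw => (le_of_lt hw).trans (le_abs_self w)
  · rw [Set.indicator_of_mem (Set.mem_Ioi.2 hx), Pi.one_apply, abs_sub_comm,
      ← probReal_compl_eq_one_sub measurableSet_Ioi, Set.compl_Ioi,
      abs_of_nonneg measureReal_nonneg, abs_of_neg hx]
    exact measureReal_mono fun w hw => (neg_le_neg hw).trans (neg_le_abs w)

lemma integrable_mul_measureReal_Ioi_sub_indicator [IsProbabilityMeasure ν]
    (hν : Integrable (fun w => Real.exp |w|) ν) (hh' : AEStronglyMeasurable h')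
    (hH : Integrable fun x => |h' x| * Real.exp (-|x|)) :
    Integrable fun x => h' x * (ν.real (Set.Ioi x) - (Set.Ioi x).indicator 1 0) := by
  have hmeas : AEStronglyMeasurable fun x => ∫ w, layerKernel x w ∂ν :=
    measurable_uncurry_layerKernel.stronglyMeasurable.integral_prod_right.aestronglyMeasurable
  simp only [integral_layerKernel] at hmeas
  refine (hH.mul_const (∫ w, Real.exp |w| ∂ν)).mono' (hh'.mul hmeas) (ae_of_all _ fun x => ?_)
  rw [norm_mul, mul_assoc]
  exact mul_le_mul_of_nonneg_left (abs_measureReal_Ioi_sub_indicator_le hν x) (norm_nonneg _)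

theorem abs_integral_sub_integral_le [IsProbabilityMeasure ν] [IsProbabilityMeasure ν'] {E : ℝ}
    (hν : Integrable (fun w => Real.exp |w|) ν) (hν' : Integrable (fun w => Real.exp |w|) ν')
    (hE : ∀ᵐ x, Real.exp |x| * |ν.real (Set.Ioi x) - ν'.real (Set.Ioi x)| ≤ E)
    (hh' : AEStronglyMeasurable h') (hFTC : ∀ y, h y - h 0 = ∫ x in (0 : ℝ)..y, h' x)
    (hH : Integrable fun x => |h' x| * Real.exp (-|x|)) :
    |∫ w, h w ∂ν - ∫ w, h w ∂ν'| ≤ E * ∫ x, |h' x| * Real.exp (-|x|) := by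
  have hint := integrable_mul_measureReal_Ioi_sub_indicator hν hh' hH
  have hint' := integrable_mul_measureReal_Ioi_sub_indicator hν' hh' hH
  rw [integral_eq_add_integral_mul_measureReal_Ioi hh' hFTC hint,
    integral_eq_add_integral_mul_measureReal_Ioi hh' hFTC hint', add_sub_add_left_eq_sub,
    ← integral_sub hint hint', ← integral_const_mul]
  refine norm_integral_le_of_norm_le (G := ℝ) (hH.const_mul E) ?_
  filter_upwards [hE] with x hx
  rw [← mul_sub, sub_sub_sub_cancel_right, norm_mul, Real.norm_eq_abs, Real.norm_eq_abs,
    mul_left_comm]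
  refine mul_le_mul_of_nonneg_left ?_ (abs_nonneg _)
  rwa [Real.exp_neg, ← div_eq_mul_inv, le_div_iff₀ (Real.exp_pos _), mul_comm]

lemma ae_measureReal_Ioi_eq_Ici (ν : Measure ℝ) [SFinite ν] :
    ∀ᵐ x : ℝ, ν.real (Set.Ioi x) = ν.real (Set.Ici x) := by
  have hatoms : {x : ℝ | 0 < ν {x}}.Countable :=
    Measure.countable_meas_pos_of_disjoint_iUnion measurableSet_singleton
      fun x y hxy => Set.disjoint_singleton.2 hxy
  filter_upwards [hatoms.ae_notMem volume] with x hx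
  refine measureReal_congr (ae_eq_set.2 ⟨?_, ?_⟩)
  · simp [Set.sdiff_eq_empty.2 Set.Ioi_subset_Ici_self]
  · simpa using hx

theorem ae_exp_abs_mul_abs_measureReal_Ioi_sub_le [IsProbabilityMeasure ν]
    [IsProbabilityMeasure ν'] {E : ℝ}
    (hE : ∀ x, Real.exp x * |ν.real (Set.Ioi x) - ν'.real (Set.Ioi x)| ≤ E)
    (hE_neg : ∀ x, Real.exp x * |(ν.map Neg.neg).real (Set.Ioi x)
      - (ν'.map Neg.neg).real (Set.Ioi x)| ≤ E) :
    ∀ᵐ x, Real.exp |x| * |ν.real (Set.Ioi x) - ν'.real (Set.Ioi x)| ≤ E := by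
  have hneg (ρ : Measure ℝ) [IsProbabilityMeasure ρ] {x : ℝ}
      (hx : ρ.real (Set.Ioi x) = ρ.real (Set.Ici x)) :
      ρ.real (Set.Ioi x) = 1 - (ρ.map Neg.neg).real (Set.Ioi (-x)) := by
    rw [hx, map_measureReal_apply measurable_neg measurableSet_Ioi, Set.neg_preimage,
      Set.neg_Ioi, neg_neg, ← probReal_compl_eq_one_sub measurableSet_Iio, Set.compl_Iio]
  filter_upwards [ae_measureReal_Ioi_eq_Ici ν, ae_measureReal_Ioi_eq_Ici ν'] with x hx hx'
  rcases le_or_gt 0 x with h0 | h0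
  · rw [abs_of_nonneg h0]
    exact hE x
  · rw [hneg ν hx, hneg ν' hx', abs_of_neg h0, sub_sub_sub_cancel_left, abs_sub_comm]
    exact hE_neg (-x)

end LayerCake

/-! ### Bounded functions and the `L²` norm -/

section Bounded

/-- Functions that are measurable with respect to a sub-σ-algebra `m` and bounded almost surely: the
class on which all conditional expectations below are taken. -/
structure IsBddMeasurable {α E : Type*} [NormedAddCommGroup E] {m₀ : MeasurableSpace α}
    (μ : Measure α) (m : MeasurableSpace α) (f : α → E) : Prop where
  stronglyMeasurable : StronglyMeasurable[m] f
  exists_norm_le : ∃ R : ℝ, ∀ᵐ ω ∂μ, ‖f ω‖ ≤ R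

variable {α E : Type*} [NormedAddCommGroup E] {m m' m₀ : MeasurableSpace α} {μ : Measure α}
  {𝕜 : Type*} [RCLike 𝕜]

namespace IsBddMeasurable

lemma mono {f : α → E} (hf : IsBddMeasurable μ m f) (hm : m ≤ m') : IsBddMeasurable μ m' f :=
  ⟨hf.stronglyMeasurable.mono hm, hf.exists_norm_le⟩

lemma const (c : E) : IsBddMeasurable μ m fun _ => c :=
  ⟨stronglyMeasurable_const, ‖c‖, ae_of_all _ fun _ => le_rfl⟩

lemma add {f g : α → E} (hf : IsBddMeasurable μ m f) (hg : IsBddMeasurable μ m g) :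
    IsBddMeasurable μ m fun ω => f ω + g ω := by
  obtain ⟨R, hR⟩ := hf.exists_norm_le
  obtain ⟨R', hR'⟩ := hg.exists_norm_le
  refine ⟨hf.stronglyMeasurable.add hg.stronglyMeasurable, R + R', ?_⟩
  filter_upwards [hR, hR'] with ω hω hω'
  exact norm_add_le_of_le hω hω'

lemma neg {f : α → E} (hf : IsBddMeasurable μ m f) : IsBddMeasurable μ m fun ω => -f ω :=
  ⟨hf.stronglyMeasurable.neg, by simpa only [norm_neg] using hf.exists_norm_le⟩

lemma sub {f g : α → E} (hf : IsBddMeasurable μ m f) (hg : IsBddMeasurable μ m g) :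
    IsBddMeasurable μ m fun ω => f ω - g ω := by
  simpa only [sub_eq_add_neg] using hf.add hg.neg

lemma sum {ι : Type*} {f : ι → α → E} (s : Finset ι) (hf : ∀ i ∈ s, IsBddMeasurable μ m (f i)) :
    IsBddMeasurable μ m fun ω => ∑ i ∈ s, f i ω := by
  classical
  induction s using Finset.induction_on with
  | empty => simpa using const (0 : E)
  | insert i s hi ih =>
    simp only [Finset.sum_insert hi]
    exact (hf i (Finset.mem_insert_self i s)).add
      (ih fun j hj => hf j (Finset.mem_insert_of_mem hj))

lemma mul {f g : α → 𝕜} (hf : IsBddMeasurable μ m f) (hg : IsBddMeasurable μ m g) :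
    IsBddMeasurable μ m fun ω => f ω * g ω := by
  obtain ⟨R, hR⟩ := hf.exists_norm_le
  obtain ⟨R', hR'⟩ := hg.exists_norm_le
  refine ⟨hf.stronglyMeasurable.mul hg.stronglyMeasurable, R * R', ?_⟩
  filter_upwards [hR, hR'] with ω hω hω'
  exact norm_mul_le_of_le hω hω'

lemma ofReal {f : α → ℝ} (hf : IsBddMeasurable μ m f) :
    IsBddMeasurable μ m fun ω => (f ω : ℂ) :=
  ⟨Complex.continuous_ofReal.comp_stronglyMeasurable hf.stronglyMeasurable,
    by simpa only [Complex.norm_real] using hf.exists_norm_le⟩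

lemma cexp {f : α → ℂ} (hf : IsBddMeasurable μ m f) :
    IsBddMeasurable μ m fun ω => Complex.exp (f ω) := by
  obtain ⟨R, hR⟩ := hf.exists_norm_le
  refine ⟨Complex.continuous_exp.comp_stronglyMeasurable hf.stronglyMeasurable, Real.exp R, ?_⟩
  filter_upwards [hR] with ω hω
  exact (Complex.norm_exp_le_exp_norm _).trans (Real.exp_le_exp.2 hω)

lemma condExp [NormedSpace ℝ E] [CompleteSpace E] {f : α → E} (hf : IsBddMeasurable μ m' f) :
    IsBddMeasurable μ m (μ[f | m]) := by
  obtain ⟨R, hR⟩ := hf.exists_norm_le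
  exact ⟨stronglyMeasurable_condExp, R, ae_bdd_norm_condExp_of_ae_bdd_norm hR⟩

variable [IsFiniteMeasure μ]

lemma memLp {f : α → E} (hf : IsBddMeasurable μ m f) (hm : m ≤ m₀) {p : ℝ≥0∞} : MemLp f p μ := by
  obtain ⟨R, hR⟩ := hf.exists_norm_le
  exact MemLp.of_bound (hf.stronglyMeasurable.mono hm).aestronglyMeasurable R hR

lemma integrable {f : α → E} (hf : IsBddMeasurable μ m f) (hm : m ≤ m₀) : Integrable f μ :=
  memLp_one_iff_integrable.1 (hf.memLp hm)

lemma condExp_eq [NormedSpace ℝ E] {f : α → E}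
    (hf : IsBddMeasurable μ m f) (hm : m ≤ m₀) : μ[f | m] = f :=
  condExp_of_stronglyMeasurable hm hf.stronglyMeasurable (hf.integrable hm)

lemma condExp_mul_left {f g : α → 𝕜} (hf : IsBddMeasurable μ m f) (hg : IsBddMeasurable μ m₀ g)
    (hm : m ≤ m₀) : μ[fun ω => f ω * g ω | m] =ᵐ[μ] fun ω => f ω * (μ[g | m]) ω :=
  condExp_bilin_of_stronglyMeasurable_left (ContinuousLinearMap.mul ℝ 𝕜) hf.stronglyMeasurable
    (((hf.mono hm).mul hg).integrable le_rfl) (hg.integrable le_rfl)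

end IsBddMeasurable

lemma ae_norm_condExp_sub_le [NormedSpace ℝ E] [CompleteSpace E] [IsFiniteMeasure μ] {g : α → E}
    {c : E} {R : ℝ} (hm : m ≤ m₀) (hg : Integrable g μ) (h : ∀ᵐ ω ∂μ, ‖g ω - c‖ ≤ R) :
    ∀ᵐ ω ∂μ, ‖(μ[g | m]) ω - c‖ ≤ R := by
  have hsub : μ[fun ω => g ω - c | m] =ᵐ[μ] μ[g | m] - μ[fun _ => c | m] :=
    condExp_sub hg (integrable_const c) m
  rw [condExp_const hm] at hsub
  filter_upwards [ae_bdd_norm_condExp_of_ae_bdd_norm (m := m) h, hsub] with ω hω hsubω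
  rwa [hsubω] at hω

lemma condExp_ofReal_ae_eq_zero {ξ : α → ℝ} (hξ : Integrable ξ μ) (h : μ[ξ | m] =ᵐ[μ] 0) :
    μ[fun ω => (ξ ω : ℂ) | m] =ᵐ[μ] 0 := by
  refine (Complex.ofRealCLM.comp_condExp_comm (m := m) hξ).symm.trans ?_
  filter_upwards [h] with ω hω
  simp [hω]

lemma lpNorm_congr_ae {f g : α → E} {p : ℝ≥0∞} (h : f =ᵐ[μ] g) :
    lpNorm f p μ = lpNorm g p μ := by
  by_cases hf : AEStronglyMeasurable f μ
  · rw [← toReal_eLpNorm hf, ← toReal_eLpNorm (hf.congr h), eLpNorm_congr_ae h]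
  · rw [lpNorm_of_not_aestronglyMeasurable hf,
      lpNorm_of_not_aestronglyMeasurable fun hg => hf (hg.congr h.symm)]

lemma lpNorm_le_mul_lpNorm {F : Type*} [NormedAddCommGroup F] {f : α → E} {g : α → F}
    {p : ℝ≥0∞} {c : ℝ} (hg : MemLp g p μ) (hc : 0 ≤ c) (h : ∀ᵐ ω ∂μ, ‖f ω‖ ≤ c * ‖g ω‖) :
    lpNorm f p μ ≤ c * lpNorm g p μ := by
  by_cases hf : AEStronglyMeasurable f μ
  · rw [← toReal_eLpNorm hf, ← toReal_eLpNorm hg.1, ← ENNReal.toReal_ofReal hc,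
      ← ENNReal.toReal_mul]
    exact ENNReal.toReal_mono (ENNReal.mul_ne_top ENNReal.ofReal_ne_top hg.2.ne)
      (eLpNorm_le_mul_eLpNorm_of_ae_le_mul h p)
  · rw [lpNorm_of_not_aestronglyMeasurable hf]
    exact mul_nonneg hc lpNorm_nonneg

lemma lpNorm_le_of_ae_norm_le [IsProbabilityMeasure μ] {f : α → E} {p : ℝ≥0∞} {K : ℝ}
    (hp : p ≠ 0) (hK : 0 ≤ K) (h : ∀ᵐ ω ∂μ, ‖f ω‖ ≤ K) : lpNorm f p μ ≤ K := by
  have hle := lpNorm_le_mul_lpNorm (g := fun _ => (1 : ℝ)) (p := p) (memLp_const 1) hK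
    (by simpa using h)
  rwa [lpNorm_const hp (IsProbabilityMeasure.ne_zero μ), probReal_univ, norm_one,
    Real.one_rpow, mul_one, mul_one] at hle

lemma lpNorm_two_sq {f : α → E} (hf : AEStronglyMeasurable f μ) :
    lpNorm f 2 μ ^ 2 = ∫ ω, ‖f ω‖ ^ 2 ∂μ := by
  rw [lpNorm_eq_integral_norm_rpow_toReal (by simp) (by simp) hf, ← Real.rpow_natCast,
    ← Real.rpow_mul (integral_nonneg fun _ => by positivity)]
  simp

lemma norm_integral_mul_le_lpNorm_mul_lpNorm {f g : α → 𝕜} (hf : MemLp f 2 μ)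
    (hg : MemLp g 2 μ) : ‖∫ ω, f ω * g ω ∂μ‖ ≤ lpNorm f 2 μ * lpNorm g 2 μ := by
  have hCS := integral_mul_norm_le_Lp_mul_Lq (μ := μ) (p := 2) (q := 2) (f := f) (g := g)
    (by constructor <;> norm_num) (by simpa using hf) (by simpa using hg)
  rw [lpNorm_eq_integral_norm_rpow_toReal (by simp) (by simp) hf.1,
    lpNorm_eq_integral_norm_rpow_toReal (by simp) (by simp) hg.1]
  refine (norm_integral_le_integral_norm _).trans ?_
  simpa only [norm_mul, ENNReal.toReal_ofNat, one_div] using hCS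

end Bounded

/-! ### Martingale approximation -/

section MartingaleApproximation

theorem exists_backward_recursion {β : Type*} (Φ : ℕ → β → β) (a : β) (n : ℕ) :
    ∃ w : ℕ → β, (∀ k, n ≤ k → w k = a) ∧ ∀ k < n, w k = Φ k (w (k + 1)) := by
  refine ⟨fun k => Nat.rec a (fun i x => Φ (n - 1 - i) x) (n - k), fun k hk => ?_, fun k hk => ?_⟩
  · simp [Nat.sub_eq_zero_of_le hk]
  · have hsucc : n - k = n - (k + 1) + 1 := by lia
    have hk' : n - 1 - (n - (k + 1)) = k := by lia
    simp only [hsucc]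
    rw [hk']

theorem backward_strong_induction {p : ℕ → Prop} (n : ℕ) (hbase : ∀ k, n ≤ k → p k)
    (hstep : ∀ k < n, (∀ j, k < j → p j) → p k) (k : ℕ) : p k := by
  suffices ∀ i k, n ≤ k + i → p k from this n k (Nat.le_add_left n k)
  intro i
  induction i with
  | zero => exact hbase
  | succ i ih =>
    intro k hk
    by_cases hkn : n ≤ k
    · exact hbase k hkn
    · exact hstep k (not_le.1 hkn) fun j hj => ih j (by lia)

variable {α : Type*} {m₀ : MeasurableSpace α}

/-- `F k` is the past before time `k`, with `F 0` trivial, and `G k ≤ F k` is generated by the last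
state of that past. Besides the Markov property, conditioning a function of the state at
time `k + N` on the past `F k` contracts the oscillation, and the `L²` norm of centred functions, by
the factor `ρ`. -/
structure IsContractiveMarkov (μ : Measure α) (F G : ℕ → MeasurableSpace α) (N : ℕ) (ρ : ℝ) :
    Prop where
  monotone : Monotone F
  le : ∀ k, F k ≤ m₀
  present_le_past : ∀ k, G k ≤ F k
  zero_eq_bot : F 0 = ⊥
  condExp_past_eq_present : ∀ (k : ℕ) {E : Type} [NormedAddCommGroup E] [NormedSpace ℝ E]
    [CompleteSpace E] (g : α → E), IsBddMeasurable μ (G (k + 1)) g → μ[g | F k] =ᵐ[μ] μ[g | G k]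
  exists_abs_condExp_sub_le : ∀ (k : ℕ) (g : α → ℝ) (c R : ℝ), IsBddMeasurable μ (G (k + N)) g →
    (∀ᵐ ω ∂μ, |g ω - c| ≤ R) → ∃ b : ℝ, ∀ᵐ ω ∂μ, |(μ[g | F k]) ω - b| ≤ ρ * R
  lpNorm_condExp_le : ∀ (k : ℕ) (g : α → ℂ), IsBddMeasurable μ (G (k + N)) g →
    ∫ ω, g ω ∂μ = 0 → lpNorm (μ[g | F k]) 2 μ ≤ ρ * lpNorm g 2 μ

/-- The corrector `B k = E[Y k + Y (k+1) + ⋯ + Y (n-1) | F k]` in Gordin's martingale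
approximation, characterised by backward recursion. -/
structure IsCorrector (μ : Measure α) (F G : ℕ → MeasurableSpace α) (n : ℕ) (Y B : ℕ → α → ℝ) :
    Prop where
  isBddMeasurable : ∀ k, IsBddMeasurable μ (G k) (B k)
  eq_zero : ∀ k, n ≤ k → B k = 0
  ae_eq_condExp : ∀ k, B k =ᵐ[μ] μ[fun ω => Y k ω + B (k + 1) ω | F k]

/-- Martingale differences up to time `n`, bounded by `K`, along which the exponential tilting of a
function of the next state depends on the past only through the present state. -/
structure IsMarkovDifference (μ : Measure α) (F G : ℕ → MeasurableSpace α) (n : ℕ) (K : ℝ)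
    (ξ : ℕ → α → ℝ) : Prop where
  isBddMeasurable : ∀ k, IsBddMeasurable μ (F (k + 1)) (ξ k)
  eq_zero : ∀ k, n ≤ k → ξ k = 0
  abs_le : ∀ k, ∀ᵐ ω ∂μ, |ξ k ω| ≤ K
  condExp_ae_eq_zero : ∀ k, μ[ξ k | F k] =ᵐ[μ] 0
  condExp_past_eq_present : ∀ (k : ℕ) (z : ℂ) (u : α → ℂ), IsBddMeasurable μ (G (k + 1)) u →
    μ[fun ω => Complex.exp (z * ξ k ω) * u ω | F k]
      =ᵐ[μ] μ[fun ω => Complex.exp (z * ξ k ω) * u ω | G k]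

variable {μ : Measure α} {F G : ℕ → MeasurableSpace α} {N n : ℕ} {ρ C : ℝ} {Y B : ℕ → α → ℝ}

lemma IsContractiveMarkov.present_le (hc : IsContractiveMarkov μ F G N ρ) (k : ℕ) : G k ≤ m₀ :=
  (hc.present_le_past k).trans (hc.le k)

lemma IsContractiveMarkov.exists_isCorrector
    (hc : IsContractiveMarkov μ F G N ρ) (hY : ∀ k, IsBddMeasurable μ (G (k + 1)) (Y k))
    (hYn : ∀ k, n ≤ k → Y k = 0) : ∃ B, IsCorrector μ F G n Y B := by
  obtain ⟨B, hBn, hB⟩ :=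
    exists_backward_recursion (fun k b => μ[fun ω => Y k ω + b ω | G k]) (0 : α → ℝ) n
  have hBdd : ∀ k, IsBddMeasurable μ (G k) (B k) := by
    refine backward_strong_induction n (fun k hk => ?_) fun k hk ih => ?_
    · rw [hBn k hk]
      exact .const 0
    · rw [hB k hk]
      exact ((hY k).add (ih (k + 1) k.lt_succ_self)).condExp
  refine ⟨B, hBdd, hBn, fun k => ?_⟩
  rcases lt_or_ge k n with hk | hk
  · rw [hB k hk]
    exact (hc.condExp_past_eq_present k _ ((hY k).add (hBdd (k + 1)))).symm
  · rw [hBn k hk, hBn (k + 1) (hk.trans k.le_succ), hYn k hk]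
    have hzero : (fun ω => (0 : α → ℝ) ω + (0 : α → ℝ) ω) = 0 := add_zero 0
    rw [hzero, condExp_zero]

namespace IsCorrector

variable [IsProbabilityMeasure μ]

lemma abs_sub_condExp_le (hB : IsCorrector μ F G n Y B) (hc : IsContractiveMarkov μ F G N ρ)
    (hY : ∀ k, IsBddMeasurable μ (G (k + 1)) (Y k)) (hYC : ∀ k, ∀ᵐ ω ∂μ, |Y k ω| ≤ C) (k j : ℕ) :
    ∀ᵐ ω ∂μ, |B k ω - (μ[B (k + j) | F k]) ω| ≤ j * C := by
  induction j with
  | zero => simp [((hB.isBddMeasurable k).mono (hc.present_le_past k)).condExp_eq (hc.le k)]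
  | succ j ih =>
    have htower : μ[B (k + j) | F k] =ᵐ[μ] μ[fun ω => Y (k + j) ω + B (k + j + 1) ω | F k] :=
      (condExp_congr_ae (hB.ae_eq_condExp (k + j))).trans
        (condExp_condExp_of_le (hc.monotone (by lia)) (hc.le _))
    have hadd : μ[fun ω => Y (k + j) ω + B (k + j + 1) ω | F k]
        =ᵐ[μ] μ[Y (k + j) | F k] + μ[B (k + j + 1) | F k] :=
      condExp_add ((hY _).integrable (hc.present_le _))
        ((hB.isBddMeasurable _).integrable (hc.present_le _)) _
    have hYF : ∀ᵐ ω ∂μ, ‖(μ[Y (k + j) | F k]) ω‖ ≤ C :=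
      ae_bdd_norm_condExp_of_ae_bdd_norm (by simpa using hYC (k + j))
    filter_upwards [ih, htower, hadd, hYF] with ω hih htowerω haddω hYω
    rw [htowerω, haddω, Pi.add_apply] at hih
    rw [Real.norm_eq_abs] at hYω
    rw [← add_assoc]
    push_cast
    rw [abs_le] at *
    constructor <;> linarith

lemma exists_abs_sub_le (hB : IsCorrector μ F G n Y B) (hc : IsContractiveMarkov μ F G N ρ)
    (hN : 0 < N) (hρ : ρ < 1) (hC : 0 ≤ C) (hY : ∀ k, IsBddMeasurable μ (G (k + 1)) (Y k))
    (hYC : ∀ k, ∀ᵐ ω ∂μ, |Y k ω| ≤ C) (k : ℕ) :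
    ∃ b : ℝ, ∀ᵐ ω ∂μ, |B k ω - b| ≤ N * C / (1 - ρ) := by
  have hρ' : 0 < 1 - ρ := sub_pos.2 hρ
  revert k
  refine backward_strong_induction n (fun k hk => ⟨0, ?_⟩) fun k _ ih => ?_
  · simp only [hB.eq_zero k hk, Pi.zero_apply, sub_zero, abs_zero, eventually_const]
    positivity
  · obtain ⟨c, hBc⟩ := ih (k + N) (by lia)
    obtain ⟨b, hb⟩ := hc.exists_abs_condExp_sub_le k _ c _ (hB.isBddMeasurable (k + N)) hBc
    have hfix : N * C + ρ * (N * C / (1 - ρ)) = N * C / (1 - ρ) := by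
      field_simp
      ring
    refine ⟨b, ?_⟩
    filter_upwards [hb, hB.abs_sub_condExp_le hc hY hYC k N] with ω hω hω'
    exact (abs_sub_le _ _ _).trans ((add_le_add hω' hω).trans_eq hfix)

lemma abs_add_sub_le (hB : IsCorrector μ F G n Y B) (hc : IsContractiveMarkov μ F G N ρ)
    (hN : 0 < N) (hρ : ρ < 1) (hC : 0 ≤ C) (hY : ∀ k, IsBddMeasurable μ (G (k + 1)) (Y k))
    (hYC : ∀ k, ∀ᵐ ω ∂μ, |Y k ω| ≤ C) (k : ℕ) :
    ∀ᵐ ω ∂μ, |Y k ω + B (k + 1) ω - B k ω| ≤ 2 * (C + N * C / (1 - ρ)) := by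
  obtain ⟨b, hb⟩ := hB.exists_abs_sub_le hc hN hρ hC hY hYC (k + 1)
  have hsum : ∀ᵐ ω ∂μ, |Y k ω + B (k + 1) ω - b| ≤ C + N * C / (1 - ρ) := by
    filter_upwards [hb, hYC k] with ω hbω hYω
    rw [add_sub_assoc]
    exact (abs_add_le _ _).trans (add_le_add hYω hbω)
  have hint : Integrable (fun ω => Y k ω + B (k + 1) ω) μ :=
    ((hY k).add (hB.isBddMeasurable (k + 1))).integrable (hc.present_le _)
  filter_upwards [hsum, ae_norm_condExp_sub_le (hc.le k) hint hsum, hB.ae_eq_condExp k]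
    with ω hω hcond hBω
  rw [← hBω, Real.norm_eq_abs, abs_sub_comm] at hcond
  linarith [abs_sub_le (Y k ω + B (k + 1) ω) b (B k ω)]

theorem isMarkovDifference (hB : IsCorrector μ F G n Y B) (hc : IsContractiveMarkov μ F G N ρ)
    (hN : 0 < N) (hρ : ρ < 1) (hC : 0 ≤ C) (hY : ∀ k, IsBddMeasurable μ (G (k + 1)) (Y k))
    (hYC : ∀ k, ∀ᵐ ω ∂μ, |Y k ω| ≤ C) (hYn : ∀ k, n ≤ k → Y k = 0) :
    IsMarkovDifference μ F G n (2 * (C + N * C / (1 - ρ)))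
      (fun k ω => Y k ω + B (k + 1) ω - B k ω) where
  isBddMeasurable k := ((hY k).add (hB.isBddMeasurable (k + 1))).mono (hc.present_le_past _) |>.sub
    ((hB.isBddMeasurable k).mono ((hc.present_le_past k).trans (hc.monotone k.le_succ)))
  eq_zero k hk := by
    simp only [hYn k hk, hB.eq_zero k hk, hB.eq_zero (k + 1) (hk.trans k.le_succ)]
    simp [Pi.zero_def]
  abs_le := hB.abs_add_sub_le hc hN hρ hC hY hYC
  condExp_ae_eq_zero k := by
    have hBk := (hB.isBddMeasurable k).mono (hc.present_le_past k)
    refine (condExp_sub (((hY k).add (hB.isBddMeasurable (k + 1))).integrable (hc.present_le _))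
      (hBk.integrable (hc.le k)) _).trans ?_
    filter_upwards [hB.ae_eq_condExp k] with ω hω
    simp [hBk.condExp_eq (hc.le k), ← hω]
  condExp_past_eq_present k z u hu := by
    have hleft : IsBddMeasurable μ (G k) fun ω => Complex.exp (z * -B k ω) :=
      ((IsBddMeasurable.const z).mul (hB.isBddMeasurable k).ofReal.neg).cexp
    have hright : IsBddMeasurable μ (G (k + 1)) fun ω =>
        Complex.exp (z * (Y k ω + B (k + 1) ω : ℝ)) * u ω :=
      ((IsBddMeasurable.const z).mul ((hY k).add (hB.isBddMeasurable (k + 1))).ofReal).cexp.mul hu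
    have hfactor : (fun ω => Complex.exp (z * (Y k ω + B (k + 1) ω - B k ω : ℝ)) * u ω) = fun ω =>
        Complex.exp (z * -B k ω) * (Complex.exp (z * (Y k ω + B (k + 1) ω : ℝ)) * u ω) := by
      ext ω
      rw [← mul_assoc, ← Complex.exp_add, ← mul_add]
      push_cast
      ring_nf
    rw [hfactor]
    have hright' := hright.mono (hc.present_le (k + 1))
    refine ((hleft.mono (hc.present_le_past k)).condExp_mul_left hright' (hc.le k)).trans ?_
    refine EventuallyEq.trans ?_ (hleft.condExp_mul_left hright' (hc.present_le k)).symm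
    filter_upwards [hc.condExp_past_eq_present k _ hright] with ω hω
    rw [hω]

end IsCorrector

lemma IsMarkovDifference.integral_eq_zero {K : ℝ} {ξ : ℕ → α → ℝ}
    (hξ : IsMarkovDifference μ F G n K ξ) (hF : ∀ k, F k ≤ m₀) [IsFiniteMeasure μ] (k : ℕ) :
    ∫ ω, ξ k ω ∂μ = 0 := by
  rw [← integral_condExp (hF k), integral_congr_ae (hξ.condExp_ae_eq_zero k)]
  simp

theorem IsContractiveMarkov.exists_isMarkovDifference [IsProbabilityMeasure μ]
    (hc : IsContractiveMarkov μ F G N ρ) (hN : 0 < N) (hρ : ρ < 1) (hC : 0 ≤ C)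
    (hY : ∀ k, IsBddMeasurable μ (G (k + 1)) (Y k)) (hYC : ∀ k, ∀ᵐ ω ∂μ, |Y k ω| ≤ C)
    (hYn : ∀ k, n ≤ k → Y k = 0) :
    ∃ ξ, IsMarkovDifference μ F G n (2 * (C + N * C / (1 - ρ))) ξ ∧ ∀ ω,
      ∑ k ∈ Finset.range n, ξ k ω
        = ∑ k ∈ Finset.range n, Y k ω - ∫ ω', ∑ k ∈ Finset.range n, Y k ω' ∂μ := by
  obtain ⟨B, hB⟩ := hc.exists_isCorrector hY hYn
  have hξ := hB.isMarkovDifference hc hN hρ hC hY hYC hYn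
  refine ⟨_, hξ, fun ω => ?_⟩
  obtain ⟨b, hb⟩ : ∃ b : ℝ, B 0 = fun _ => b := by
    have hbot : G 0 = ⊥ := le_bot_iff.1 (hc.zero_eq_bot ▸ hc.present_le_past 0)
    exact stronglyMeasurable_bot_iff.1 (hbot ▸ (hB.isBddMeasurable 0).stronglyMeasurable)
  have htelescope (ω : α) : ∑ k ∈ Finset.range n, (Y k ω + B (k + 1) ω - B k ω)
      = ∑ k ∈ Finset.range n, Y k ω - b := by
    simp only [add_sub_assoc, Finset.sum_add_distrib]
    rw [Finset.sum_range_sub (fun k => B k ω), hB.eq_zero n le_rfl, hb]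
    simp [sub_eq_add_neg]
  have hS : Integrable (fun ω => ∑ k ∈ Finset.range n, Y k ω) μ :=
    integrable_finsetSum _ fun k _ => (hY k).integrable (hc.present_le _)
  have hmean : ∫ ω, ∑ k ∈ Finset.range n, Y k ω ∂μ - b = 0 := by
    have hint := integral_finsetSum (μ := μ) (Finset.range n) fun k _ =>
      (hξ.isBddMeasurable k).integrable (hc.le _)
    simp only [hξ.integral_eq_zero hc.le, htelescope, integral_sub hS (integrable_const b)] at hint
    simpa using hint
  rw [htelescope, sub_eq_zero.1 hmean]

end MartingaleApproximation

/-! ### Exponential tilting -/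

section ExpTilt

lemma norm_cexp_sub_taylor_two_le {x : ℂ} (hx : ‖x‖ ≤ 1) :
    ‖Complex.exp x - 1 - x - x ^ 2 / 2‖ ≤ ‖x‖ ^ 3 := by
  have htaylor := Complex.exp_bound hx (n := 3) (by norm_num)
  have hsum : ∑ i ∈ Finset.range 3, x ^ i / (i.factorial : ℂ) = 1 + x + x ^ 2 / 2 := by
    simp [Finset.sum_range_succ]
  rw [hsum] at htaylor
  calc ‖Complex.exp x - 1 - x - x ^ 2 / 2‖ = ‖Complex.exp x - (1 + x + x ^ 2 / 2)‖ := by ring_nf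
    _ ≤ ‖x‖ ^ 3 * (4 * (6 * 3 : ℝ)⁻¹) := by simpa [Nat.factorial] using htaylor
    _ ≤ ‖x‖ ^ 3 := mul_le_of_le_one_right (by positivity) (by norm_num)

variable {α : Type*}

/-- The weight `w` tilted by the exponential `exp (z ξ)`. -/
def expTilt (z : ℂ) (ξ : α → ℝ) (w : α → ℂ) (ω : α) : ℂ :=
  Complex.exp (z * ξ ω) * w ω

variable {m m₀ : MeasurableSpace α} {μ : Measure α} {ξ : α → ℝ} {w : α → ℂ} {K : ℝ} {z : ℂ}

lemma IsBddMeasurable.expTilt (hξ : IsBddMeasurable μ m ξ) (hw : IsBddMeasurable μ m w) (z : ℂ) :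
    IsBddMeasurable μ m (expTilt z ξ w) :=
  ((IsBddMeasurable.const z).mul hξ.ofReal).cexp.mul hw

lemma norm_mul_ofReal_le (z : ℂ) {x : ℝ} (hx : |x| ≤ K) : ‖z * x‖ ≤ ‖z‖ * K := by
  rw [norm_mul, Complex.norm_real]
  gcongr
  exact hx

lemma norm_cexp_mul_sub_one_le {x : ℝ} (hzK : ‖z‖ * K ≤ 1) (hx : |x| ≤ K) :
    ‖Complex.exp (z * x) - 1‖ ≤ 2 * ‖z‖ * ‖x‖ := by
  simpa [mul_assoc] using Complex.norm_exp_sub_one_le ((norm_mul_ofReal_le z hx).trans hzK)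

variable [IsProbabilityMeasure μ]

lemma lpNorm_cexp_sub_one_le (hξ : IsBddMeasurable μ m₀ ξ) (hK : ∀ᵐ ω ∂μ, |ξ ω| ≤ K)
    (hzK : ‖z‖ * K ≤ 1) :
    lpNorm (fun ω => Complex.exp (z * ξ ω) - 1) 2 μ ≤ 2 * ‖z‖ * lpNorm ξ 2 μ := by
  refine lpNorm_le_mul_lpNorm (hξ.memLp le_rfl) (by positivity) ?_
  filter_upwards [hK] with ω hω using norm_cexp_mul_sub_one_le hzK hω

lemma lpNorm_cexp_sub_one_mul_le {g : α → ℂ} (hg : MemLp g 2 μ) (hK : ∀ᵐ ω ∂μ, |ξ ω| ≤ K)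
    (hzK : ‖z‖ * K ≤ 1) :
    lpNorm (fun ω => (Complex.exp (z * ξ ω) - 1) * g ω) 2 μ ≤ 2 * (‖z‖ * K) * lpNorm g 2 μ := by
  obtain ⟨ω₀, hω₀⟩ := hK.exists
  have hK_nonneg : 0 ≤ K := (abs_nonneg _).trans hω₀
  refine lpNorm_le_mul_lpNorm hg (by positivity) ?_
  filter_upwards [hK] with ω hω
  rw [norm_mul]
  gcongr
  refine (norm_cexp_mul_sub_one_le hzK hω).trans ?_
  rw [mul_assoc, Real.norm_eq_abs]
  gcongr

lemma lpNorm_cexp_sub_one_sub_id_le (hξ : IsBddMeasurable μ m₀ ξ) (hK : ∀ᵐ ω ∂μ, |ξ ω| ≤ K)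
    (hzK : ‖z‖ * K ≤ 1) :
    lpNorm (fun ω => Complex.exp (z * ξ ω) - 1 - z * ξ ω) 2 μ
      ≤ ‖z‖ * K * ‖z‖ * lpNorm ξ 2 μ := by
  obtain ⟨ω₀, hω₀⟩ := hK.exists
  have hK_nonneg : 0 ≤ K := (abs_nonneg _).trans hω₀
  refine lpNorm_le_mul_lpNorm (hξ.memLp le_rfl) (by positivity) ?_
  filter_upwards [hK] with ω hω
  have hε := norm_mul_ofReal_le z hω
  calc ‖Complex.exp (z * ξ ω) - 1 - z * ξ ω‖
      ≤ ‖z * ξ ω‖ * ‖z * ξ ω‖ := by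
        simpa only [sq] using Complex.norm_exp_sub_one_sub_id_le (hε.trans hzK)
    _ ≤ ‖z‖ * K * (‖z‖ * ‖ξ ω‖) := by
        gcongr
        rw [norm_mul, Complex.norm_real]
    _ = ‖z‖ * K * ‖z‖ * ‖ξ ω‖ := by ring

lemma norm_integral_cexp_sub_le (hξ : IsBddMeasurable μ m₀ ξ) (hK : ∀ᵐ ω ∂μ, |ξ ω| ≤ K)
    (hzK : ‖z‖ * K ≤ 1) (hξ_zero : ∫ ω, ξ ω ∂μ = 0) :
    ‖∫ ω, Complex.exp (z * ξ ω) ∂μ - 1 - z ^ 2 * lpNorm ξ 2 μ ^ 2 / 2‖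
      ≤ ‖z‖ ^ 3 * K * lpNorm ξ 2 μ ^ 2 := by
  have hsq := lpNorm_two_sq (hξ.memLp le_rfl (p := 2)).1
  have hzξ : IsBddMeasurable μ m₀ fun ω => z * (ξ ω : ℂ) := (IsBddMeasurable.const z).mul hξ.ofReal
  have hquad : IsBddMeasurable μ m₀ fun ω => (z * (ξ ω : ℂ)) ^ 2 / 2 := by
    simpa only [sq, div_eq_mul_inv] using (hzξ.mul hzξ).mul (IsBddMeasurable.const 2⁻¹)
  have hzξ_int : ∫ ω, z * (ξ ω : ℂ) ∂μ = 0 := by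
    rw [integral_const_mul, integral_complex_ofReal, hξ_zero, Complex.ofReal_zero, mul_zero]
  have hquad_int : ∫ ω, (z * (ξ ω : ℂ)) ^ 2 / 2 ∂μ = z ^ 2 * lpNorm ξ 2 μ ^ 2 / 2 := by
    simp only [mul_pow, ← Complex.ofReal_pow, integral_div, integral_const_mul,
      integral_complex_ofReal, hsq, Real.norm_eq_abs, sq_abs]
  have hone : IsBddMeasurable μ m₀ fun _ : α => (1 : ℂ) := .const 1
  have hsplit : ∫ ω, Complex.exp (z * ξ ω) ∂μ - 1 - z ^ 2 * lpNorm ξ 2 μ ^ 2 / 2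
      = ∫ ω, (Complex.exp (z * ξ ω) - 1 - z * ξ ω - (z * ξ ω) ^ 2 / 2) ∂μ := by
    rw [integral_sub (((hzξ.cexp.sub hone).sub hzξ).integrable le_rfl) (hquad.integrable le_rfl),
      integral_sub ((hzξ.cexp.sub hone).integrable le_rfl) (hzξ.integrable le_rfl),
      integral_sub (hzξ.cexp.integrable le_rfl) (integrable_const 1), hzξ_int, hquad_int]
    simp
  rw [hsplit, hsq, ← integral_const_mul]
  refine norm_integral_le_of_norm_le
    (((hξ.memLp le_rfl (p := 2)).integrable_norm_pow two_ne_zero).const_mul _) ?_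
  filter_upwards [hK] with ω hω
  calc ‖Complex.exp (z * ξ ω) - 1 - z * ξ ω - (z * ξ ω) ^ 2 / 2‖
      ≤ ‖z * ξ ω‖ ^ 3 := norm_cexp_sub_taylor_two_le ((norm_mul_ofReal_le z hω).trans hzK)
    _ = ‖z‖ ^ 3 * |ξ ω| * ‖ξ ω‖ ^ 2 := by
      rw [norm_mul, Complex.norm_real, Real.norm_eq_abs]
      ring
    _ ≤ ‖z‖ ^ 3 * K * ‖ξ ω‖ ^ 2 := by gcongr

lemma norm_integral_expTilt_sub_le (hξ : IsBddMeasurable μ m₀ ξ) (hw : IsBddMeasurable μ m₀ w)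
    (hK : ∀ᵐ ω ∂μ, |ξ ω| ≤ K) (hzK : ‖z‖ * K ≤ 1) (hξ_zero : ∫ ω, ξ ω ∂μ = 0)
    (hw_one : ∫ ω, w ω ∂μ = 1) :
    ‖∫ ω, expTilt z ξ w ω ∂μ - 1 - z ^ 2 * lpNorm ξ 2 μ ^ 2 / 2‖
      ≤ ‖z‖ ^ 3 * K * lpNorm ξ 2 μ ^ 2
        + 2 * ‖z‖ * lpNorm ξ 2 μ * lpNorm (fun ω => w ω - 1) 2 μ := by
  have hone : IsBddMeasurable μ m₀ fun _ : α => (1 : ℂ) := .const 1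
  have hexp : IsBddMeasurable μ m₀ fun ω => Complex.exp (z * ξ ω) :=
    ((IsBddMeasurable.const z).mul hξ.ofReal).cexp
  have hcross := (hexp.sub hone).mul (hw.sub hone)
  have hsplit : ∫ ω, expTilt z ξ w ω ∂μ = ∫ ω, Complex.exp (z * ξ ω) ∂μ
      + ∫ ω, (Complex.exp (z * ξ ω) - 1) * (w ω - 1) ∂μ := by
    have hpoint : expTilt z ξ w = fun ω => Complex.exp (z * ξ ω)
        + (Complex.exp (z * ξ ω) - 1) * (w ω - 1) + (w ω - 1) := by
      ext ω
      simp only [expTilt]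
      ring
    rw [hpoint,
      integral_add ((hexp.add hcross).integrable le_rfl) ((hw.sub hone).integrable le_rfl),
      integral_add (hexp.integrable le_rfl) (hcross.integrable le_rfl),
      integral_sub (hw.integrable le_rfl) (integrable_const 1), hw_one]
    simp
  rw [hsplit, add_sub_right_comm, add_sub_right_comm]
  refine norm_add_le_of_le (norm_integral_cexp_sub_le hξ hK hzK hξ_zero) ?_
  refine (norm_integral_mul_le_lpNorm_mul_lpNorm ((hexp.sub hone).memLp le_rfl)
    ((hw.sub hone).memLp le_rfl)).trans ?_
  gcongr
  exacts [lpNorm_nonneg, lpNorm_cexp_sub_one_le hξ hK hzK]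

lemma norm_integral_expTilt_sub_one_le (hξ : IsBddMeasurable μ m₀ ξ)
    (hw : IsBddMeasurable μ m₀ w) (hK : ∀ᵐ ω ∂μ, |ξ ω| ≤ K) (hzK : ‖z‖ * K ≤ 1 / 2)
    (hξ_zero : ∫ ω, ξ ω ∂μ = 0) (hw_one : ∫ ω, w ω ∂μ = 1) :
    ‖∫ ω, expTilt z ξ w ω ∂μ - 1‖
      ≤ ‖z‖ * K * (‖z‖ * lpNorm ξ 2 μ + 2 * lpNorm (fun ω => w ω - 1) 2 μ) := by
  have hA := norm_integral_expTilt_sub_le hξ hw hK (hzK.trans (by norm_num)) hξ_zero hw_one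
  obtain ⟨ω, hω⟩ := hK.exists
  have hs_le : lpNorm ξ 2 μ ≤ K :=
    lpNorm_le_of_ae_norm_le two_ne_zero ((abs_nonneg _).trans hω) hK
  have hs : 0 ≤ lpNorm ξ 2 μ := lpNorm_nonneg
  have hR : 0 ≤ lpNorm (fun ω => w ω - 1) 2 μ := lpNorm_nonneg
  have hquad : ‖z ^ 2 * (lpNorm ξ 2 μ : ℂ) ^ 2 / 2‖ = ‖z‖ ^ 2 * lpNorm ξ 2 μ ^ 2 / 2 := by
    simp [abs_of_nonneg hs]
  calc ‖∫ ω, expTilt z ξ w ω ∂μ - 1‖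
      ≤ ‖z‖ ^ 3 * K * lpNorm ξ 2 μ ^ 2
        + 2 * ‖z‖ * lpNorm ξ 2 μ * lpNorm (fun ω => w ω - 1) 2 μ
        + ‖z‖ ^ 2 * lpNorm ξ 2 μ ^ 2 / 2 := by
        rw [← hquad]
        exact (norm_le_norm_sub_add _ _).trans (by gcongr)
    _ = ‖z‖ ^ 2 * lpNorm ξ 2 μ ^ 2 * (‖z‖ * K + 1 / 2)
        + 2 * ‖z‖ * lpNorm ξ 2 μ * lpNorm (fun ω => w ω - 1) 2 μ := by ring
    _ ≤ ‖z‖ ^ 2 * (lpNorm ξ 2 μ * K) * 1 + 2 * ‖z‖ * K * lpNorm (fun ω => w ω - 1) 2 μ := by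
        have hK_nonneg : 0 ≤ K := hs.trans hs_le
        rw [sq (lpNorm ξ 2 μ)]
        gcongr
        linarith
    _ = ‖z‖ * K * (‖z‖ * lpNorm ξ 2 μ + 2 * lpNorm (fun ω => w ω - 1) 2 μ) := by ring

lemma lpNorm_expTilt_sub_le (hξ : IsBddMeasurable μ m₀ ξ) (hw : IsBddMeasurable μ m₀ w)
    (hK : ∀ᵐ ω ∂μ, |ξ ω| ≤ K) (hzK : ‖z‖ * K ≤ 1 / 2) (hξ_zero : ∫ ω, ξ ω ∂μ = 0)
    (hw_one : ∫ ω, w ω ∂μ = 1) (hw_le : lpNorm (fun ω => w ω - 1) 2 μ ≤ 1) :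
    lpNorm (fun ω => expTilt z ξ w ω - (∫ ω', expTilt z ξ w ω' ∂μ) * w ω - z * ξ ω) 2 μ
      ≤ 3 * (‖z‖ * K) * (‖z‖ * lpNorm ξ 2 μ + 2 * lpNorm (fun ω => w ω - 1) 2 μ) := by
  have hone : IsBddMeasurable μ m₀ fun _ : α => (1 : ℂ) := .const 1
  have hzξ : IsBddMeasurable μ m₀ fun ω => z * (ξ ω : ℂ) := (IsBddMeasurable.const z).mul hξ.ofReal
  have hlam := norm_integral_expTilt_sub_one_le hξ hw hK hzK hξ_zero hw_one
  set lam := ∫ ω, expTilt z ξ w ω ∂μ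
  set R := lpNorm (fun ω => w ω - 1) 2 μ
  have hw_two : lpNorm w 2 μ ≤ 2 := by
    have hadd := lpNorm_add_le (μ := μ) (p := 2) ((hw.sub hone).memLp le_rfl) one_le_two
      (g := fun _ => (1 : ℂ))
    have hsum : (fun ω => w ω - 1) + (fun _ => (1 : ℂ)) = w := sub_add_cancel w 1
    rw [hsum, lpNorm_const two_ne_zero (IsProbabilityMeasure.ne_zero μ)] at hadd
    exact hadd.trans ((add_le_add_left hw_le _).trans (by norm_num))
  have hmass : lpNorm (fun ω => (1 - lam) * w ω) 2 μ
      ≤ 2 * (‖z‖ * K * (‖z‖ * lpNorm ξ 2 μ + 2 * R)) := by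
    refine (lpNorm_le_mul_lpNorm (hw.memLp le_rfl) (norm_nonneg (1 - lam))
      (ae_of_all _ fun ω => (norm_mul _ _).le)).trans ?_
    rw [norm_sub_rev, mul_comm]
    gcongr
  have hsplit : (fun ω => expTilt z ξ w ω - lam * w ω - z * ξ ω)
      = (fun ω => Complex.exp (z * ξ ω) - 1 - z * ξ ω)
        + ((fun ω => (Complex.exp (z * ξ ω) - 1) * (w ω - 1)) + fun ω => (1 - lam) * w ω) := by
    ext ω
    simp only [expTilt, Pi.add_apply]
    ring
  rw [hsplit]
  have hquad := lpNorm_cexp_sub_one_sub_id_le (z := z) hξ hK (hzK.trans (by norm_num))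
  have hcross := lpNorm_cexp_sub_one_mul_le (z := z) ((hw.sub hone).memLp le_rfl) hK
    (hzK.trans (by norm_num))
  have hadd := lpNorm_add_le (((hzξ.cexp.sub hone).sub hzξ).memLp le_rfl (p := 2)) one_le_two
    (g := (fun ω => (Complex.exp (z * ξ ω) - 1) * (w ω - 1)) + fun ω => (1 - lam) * w ω)
  have hadd' := lpNorm_add_le (((hzξ.cexp.sub hone).mul (hw.sub hone)).memLp le_rfl (p := 2))
    one_le_two (g := fun ω => (1 - lam) * w ω)
  linarith

lemma lpNorm_condExp_expTilt_sub_le (hm : m ≤ m₀) (hξ : IsBddMeasurable μ m₀ ξ)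
    (hw : IsBddMeasurable μ m₀ w) (hK : ∀ᵐ ω ∂μ, |ξ ω| ≤ K) (hzK : ‖z‖ * K ≤ 1 / 2)
    (hξ_condExp : μ[ξ | m] =ᵐ[μ] 0) (hw_one : ∫ ω, w ω ∂μ = 1)
    (hw_le : lpNorm (fun ω => w ω - 1) 2 μ ≤ 1) :
    lpNorm (fun ω => (μ[expTilt z ξ w | m]) ω - (∫ ω', expTilt z ξ w ω' ∂μ) * (μ[w | m]) ω) 2 μ
      ≤ 3 * (‖z‖ * K) * (‖z‖ * lpNorm ξ 2 μ + 2 * lpNorm (fun ω => w ω - 1) 2 μ) := by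
  have hξ_zero : ∫ ω, ξ ω ∂μ = 0 := by
    rw [← integral_condExp hm, integral_congr_ae hξ_condExp]
    simp
  set lam := ∫ ω, expTilt z ξ w ω ∂μ
  have htilt : IsBddMeasurable μ m₀ (expTilt z ξ w) := hξ.expTilt hw z
  have hlam : IsBddMeasurable μ m₀ fun ω => lam * w ω := (IsBddMeasurable.const lam).mul hw
  have hzξ : IsBddMeasurable μ m₀ fun ω => z * (ξ ω : ℂ) := (IsBddMeasurable.const z).mul hξ.ofReal
  have hcond : μ[fun ω => expTilt z ξ w ω - lam * w ω - z * ξ ω | m]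
      =ᵐ[μ] fun ω => (μ[expTilt z ξ w | m]) ω - lam * (μ[w | m]) ω := by
    filter_upwards [condExp_sub ((htilt.sub hlam).integrable le_rfl) (hzξ.integrable le_rfl) m,
      condExp_sub (htilt.integrable le_rfl) (hlam.integrable le_rfl) m,
      (IsBddMeasurable.const lam).condExp_mul_left hw hm,
      (IsBddMeasurable.const z).condExp_mul_left hξ.ofReal hm,
      condExp_ofReal_ae_eq_zero (hξ.integrable le_rfl) hξ_condExp] with ω h₁ h₂ h₃ h₄ h₅
    simp only [Pi.sub_def, h₃, h₄, h₅, Pi.zero_apply, mul_zero, sub_zero] at h₁ h₂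
    rw [h₁, h₂]
  rw [← lpNorm_congr_ae hcond]
  exact (((htilt.sub hlam).sub hzξ).memLp le_rfl).lpNorm_condExp_le_lpNorm one_le_two |>.trans
    (lpNorm_expTilt_sub_le hξ hw hK hzK hξ_zero hw_one hw_le)

end ExpTilt

/-! ### Normalised densities along the chain -/

section TiltedDensity

variable {α : Type*} {m₀ : MeasurableSpace α} {μ : Measure α}

/-- The quasi-eigenvector relation at time `k` for the transition operators tilted by `exp (z ξ)`,
with eigenvalue `∫ expTilt z (ξ k) (w (k+1))`: `w k` is the conditional expectation of
`exp (z (ξ k + ξ (k+1) + ⋯))` given the present, normalised to have mean one. -/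
structure IsTiltedDensity (μ : Measure α) (F G : ℕ → MeasurableSpace α) (z : ℂ) (ξ : ℕ → α → ℝ)
    (w : ℕ → α → ℂ) (k : ℕ) : Prop where
  isBddMeasurable : IsBddMeasurable μ (G k) (w k)
  integral_eq_one : ∫ ω, w k ω ∂μ = 1
  condExp_ae_eq : μ[expTilt z (ξ k) (w (k + 1)) | F k]
    =ᵐ[μ] fun ω => (∫ ω', expTilt z (ξ k) (w (k + 1)) ω' ∂μ) * w k ω

variable {F G : ℕ → MeasurableSpace α} {N n : ℕ} {ρ K : ℝ} {ξ : ℕ → α → ℝ} {w : ℕ → α → ℂ}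
  {z : ℂ}

lemma lpNorm_sub_condExp_le {E : Type*} [NormedAddCommGroup E] [NormedSpace ℝ E] [CompleteSpace E]
    [IsFiniteMeasure μ] {r : ℕ → α → E} {d : ℕ → ℝ} {k : ℕ} {p : ℝ≥0∞} (hF : Monotone F)
    (hF_le : ∀ i, F i ≤ m₀) (hp : 1 ≤ p) (hr : ∀ i, k ≤ i → IsBddMeasurable μ (F i) (r i))
    (hd : ∀ i, k ≤ i → lpNorm (r i - μ[r (i + 1) | F i]) p μ ≤ d i) (j : ℕ) :
    lpNorm (r k - μ[r (k + j) | F k]) p μ ≤ ∑ i ∈ Finset.range j, d (k + i) := by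
  induction j with
  | zero => simp [(hr k le_rfl).condExp_eq (hF_le k)]
  | succ j ih =>
    have hrj := (hr (k + j) (Nat.le_add_right k j)).mono (hF_le _)
    have hcond : IsBddMeasurable μ m₀ (μ[r (k + j + 1) | F (k + j)]) :=
      ((hr (k + j + 1) (by lia)).condExp).mono (hF_le _)
    have hdiff : IsBddMeasurable μ m₀ (r (k + j) - μ[r (k + j + 1) | F (k + j)]) := hrj.sub hcond
    have hsplit : r k - μ[r (k + j + 1) | F k] =ᵐ[μ] r k - μ[r (k + j) | F k]
        + μ[r (k + j) - μ[r (k + j + 1) | F (k + j)] | F k] := by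
      filter_upwards [condExp_sub (hrj.integrable le_rfl) (hcond.integrable le_rfl) (F k),
        condExp_condExp_of_le (μ := μ) (f := r (k + j + 1)) (hF (Nat.le_add_right k j)) (hF_le _)]
        with ω hω hω'
      simp only [Pi.sub_apply, Pi.add_apply] at hω ⊢
      rw [hω, hω']
      abel
    have hk : IsBddMeasurable μ m₀ (r k - μ[r (k + j) | F k]) :=
      ((hr k le_rfl).sub (hr (k + j) (Nat.le_add_right k j)).condExp).mono (hF_le k)
    rw [Finset.sum_range_succ, ← add_assoc, lpNorm_congr_ae hsplit]
    refine (lpNorm_add_le (hk.memLp le_rfl) hp).trans (add_le_add ih ?_)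
    exact ((hdiff.memLp le_rfl).lpNorm_condExp_le_lpNorm hp).trans (hd _ (Nat.le_add_right k j))

variable [IsProbabilityMeasure μ]

namespace IsMarkovDifference

lemma bound_nonneg (hξ : IsMarkovDifference μ F G n K ξ) : 0 ≤ K := by
  obtain ⟨ω, hω⟩ := (hξ.abs_le 0).exists
  exact (abs_nonneg _).trans hω

lemma half_le_norm_integral_expTilt (hξ : IsMarkovDifference μ F G n K ξ) (hF : ∀ k, F k ≤ m₀)
    (hzK : ‖z‖ * K ≤ 1 / 16) (k : ℕ) {u : α → ℂ} (hu : IsBddMeasurable μ m₀ u)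
    (hu_one : ∫ ω, u ω ∂μ = 1) (hu_le : lpNorm (fun ω => u ω - 1) 2 μ ≤ 1) :
    1 / 2 ≤ ‖∫ ω, expTilt z (ξ k) u ω ∂μ‖ := by
  have hlam := norm_integral_expTilt_sub_one_le ((hξ.isBddMeasurable k).mono (hF _)) hu
    (hξ.abs_le k) (hzK.trans (by norm_num)) (hξ.integral_eq_zero hF k) hu_one
  have hs : lpNorm (ξ k) 2 μ ≤ K :=
    lpNorm_le_of_ae_norm_le two_ne_zero hξ.bound_nonneg (hξ.abs_le k)
  have hsmall : ‖z‖ * K * (‖z‖ * lpNorm (ξ k) 2 μ + 2 * lpNorm (fun ω => u ω - 1) 2 μ)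
      ≤ 1 / 16 * (‖z‖ * K + 2 * 1) := by
    have hs_nonneg : 0 ≤ lpNorm (ξ k) 2 μ := lpNorm_nonneg
    have hR_nonneg : 0 ≤ lpNorm (fun ω => u ω - 1) 2 μ := lpNorm_nonneg
    gcongr
  have htriangle := norm_sub_norm_le (1 : ℂ) (1 - ∫ ω, expTilt z (ξ k) u ω ∂μ)
  rw [sub_sub_cancel, norm_one, norm_sub_rev] at htriangle
  linarith

lemma isTiltedDensity_of_le (hξ : IsMarkovDifference μ F G n K ξ) (hF : ∀ k, F k ≤ m₀)
    (hw : ∀ k, n ≤ k → w k = 1) {k : ℕ} (hk : n ≤ k) : IsTiltedDensity μ F G z ξ w k := by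
  have hone : IsBddMeasurable μ (G k) (1 : α → ℂ) := .const 1
  have htilt : expTilt z (ξ k) (w (k + 1)) = fun _ => 1 := by
    ext ω
    simp [expTilt, hξ.eq_zero k hk, hw (k + 1) (by lia)]
  refine ⟨by rwa [hw k hk], by simp [hw k hk], ?_⟩
  rw [htilt, condExp_const (hF k), hw k hk]
  simp

lemma isTiltedDensity_of_eq (hξ : IsMarkovDifference μ F G n K ξ) (hF : ∀ k, F k ≤ m₀)
    (hG : ∀ k, G k ≤ m₀) {k : ℕ} (hw : IsBddMeasurable μ (G (k + 1)) (w (k + 1)))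
    (hlam : ∫ ω, expTilt z (ξ k) (w (k + 1)) ω ∂μ ≠ 0)
    (hwk : w k = fun ω => (∫ ω', expTilt z (ξ k) (w (k + 1)) ω' ∂μ)⁻¹
      * (μ[expTilt z (ξ k) (w (k + 1)) | G k]) ω) :
    IsTiltedDensity μ F G z ξ w k := by
  have htilt : IsBddMeasurable μ m₀ (expTilt z (ξ k) (w (k + 1))) :=
    ((hξ.isBddMeasurable k).mono (hF _)).expTilt (hw.mono (hG _)) z
  refine ⟨?_, ?_, ?_⟩
  · rw [hwk]
    exact (IsBddMeasurable.const _).mul htilt.condExp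
  · rw [hwk, integral_const_mul, integral_condExp (hG k), inv_mul_cancel₀ hlam]
  · filter_upwards [hξ.condExp_past_eq_present k z _ hw] with ω hω
    rw [hwk, mul_inv_cancel_left₀ hlam]
    exact hω

end IsMarkovDifference

namespace IsTiltedDensity

lemma lpNorm_sub_condExp_succ_le (hξ : IsMarkovDifference μ F G n K ξ) (hF : ∀ k, F k ≤ m₀)
    (hG : ∀ k, G k ≤ m₀) (hzK : ‖z‖ * K ≤ 1 / 16) {k : ℕ} (hw : IsTiltedDensity μ F G z ξ w k)
    (hw' : IsTiltedDensity μ F G z ξ w (k + 1))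
    (hR : lpNorm (fun ω => w (k + 1) ω - 1) 2 μ ≤ 1) :
    lpNorm (w k - μ[w (k + 1) | F k]) 2 μ ≤ 6 * (‖z‖ * K) * (‖z‖ * lpNorm (ξ k) 2 μ
      + 2 * lpNorm (fun ω => w (k + 1) ω - 1) 2 μ) := by
  have hu := hw'.isBddMeasurable.mono (hG _)
  have hlam := hξ.half_le_norm_integral_expTilt hF hzK k hu hw'.integral_eq_one hR
  have hstep := lpNorm_condExp_expTilt_sub_le (z := z) (hF k)
    ((hξ.isBddMeasurable k).mono (hF _)) hu (hξ.abs_le k) (hzK.trans (by norm_num))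
    (hξ.condExp_ae_eq_zero k) hw'.integral_eq_one hR
  set lam := ∫ ω, expTilt z (ξ k) (w (k + 1)) ω ∂μ
  have hdiff : IsBddMeasurable μ m₀ fun ω => lam * w k ω - lam * (μ[w (k + 1) | F k]) ω :=
    ((IsBddMeasurable.const lam).mul (hw.isBddMeasurable.mono (hG k))).sub
      ((IsBddMeasurable.const lam).mul (hu.condExp.mono (hF k)))
  have hscale : lpNorm (w k - μ[w (k + 1) | F k]) 2 μ
      ≤ 2 * lpNorm (fun ω => lam * w k ω - lam * (μ[w (k + 1) | F k]) ω) 2 μ := by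
    refine lpNorm_le_mul_lpNorm (hdiff.memLp le_rfl) zero_le_two (ae_of_all _ fun ω => ?_)
    rw [← mul_sub, norm_mul, ← mul_assoc]
    exact le_mul_of_one_le_left (norm_nonneg _) (by linarith)
  have hcongr : (fun ω => (μ[expTilt z (ξ k) (w (k + 1)) | F k]) ω - lam * (μ[w (k + 1) | F k]) ω)
      =ᵐ[μ] fun ω => lam * w k ω - lam * (μ[w (k + 1) | F k]) ω := by
    filter_upwards [hw.condExp_ae_eq] with ω hω
    rw [hω]
  rw [lpNorm_congr_ae hcongr] at hstep
  linarith

lemma lpNorm_sub_one_le (hc : IsContractiveMarkov μ F G N ρ) (hξ : IsMarkovDifference μ F G n K ξ)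
    (hzK : ‖z‖ * K ≤ 1 / 16) {k : ℕ} (hw : ∀ j, k ≤ j → IsTiltedDensity μ F G z ξ w j)
    (hR : ∀ j, k < j → lpNorm (fun ω => w j ω - 1) 2 μ ≤ 1) :
    lpNorm (fun ω => w k ω - 1) 2 μ ≤ ρ * lpNorm (fun ω => w (k + N) ω - 1) 2 μ
      + ∑ i ∈ Finset.range N, 6 * (‖z‖ * K) * (‖z‖ * lpNorm (ξ (k + i)) 2 μ
        + 2 * lpNorm (fun ω => w (k + i + 1) ω - 1) 2 μ) := by
  have hwk := (hw k le_rfl).isBddMeasurable.mono (hc.present_le k)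
  have hwN := (hw (k + N) (Nat.le_add_right k N)).isBddMeasurable
  have htele := lpNorm_sub_condExp_le hc.monotone hc.le one_le_two
    (fun i hi => (hw i hi).isBddMeasurable.mono (hc.present_le_past i))
    (fun i hi => (hw i hi).lpNorm_sub_condExp_succ_le hξ hc.le hc.present_le hzK
      (hw (i + 1) (hi.trans i.le_succ)) (hR (i + 1) (Nat.lt_succ_of_le hi))) N
  have hcontract := hc.lpNorm_condExp_le k _ (hwN.sub (.const 1)) (by
    rw [integral_sub (hwN.integrable (hc.present_le _)) (integrable_const 1),
      (hw (k + N) (Nat.le_add_right k N)).integral_eq_one]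
    simp)
  have hsplit : (fun ω => w k ω - 1)
      =ᵐ[μ] (w k - μ[w (k + N) | F k]) + μ[fun ω => w (k + N) ω - 1 | F k] := by
    filter_upwards [condExp_sub (hwN.integrable (hc.present_le _)) (integrable_const 1) (F k)]
      with ω hω
    simp only [Pi.sub_def, condExp_const (hc.le k)] at hω
    simp only [Pi.add_apply, Pi.sub_apply, hω]
    ring
  rw [lpNorm_congr_ae hsplit, add_comm (ρ * _)]
  refine (lpNorm_add_le (IsBddMeasurable.memLp ?_ le_rfl) one_le_two).trans
    (add_le_add htele hcontract)
  exact hwk.sub ((hwN.condExp).mono (hc.le k))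

end IsTiltedDensity

lemma mul_add_sum_le_one {r ε : ℝ} {a b : ℕ → ℝ} (hρ₀ : 0 ≤ ρ) (hε : 0 ≤ ε)
    (hεN : ε * (40 * N) ≤ 1 - ρ) (hr : r ≤ 1) (ha : ∀ i, a i ≤ 1 / 16) (hb : ∀ i, b i ≤ 1) :
    ρ * r + ∑ i ∈ Finset.range N, 6 * ε * (a i + 2 * b i) ≤ 1 :=
  calc ρ * r + ∑ i ∈ Finset.range N, 6 * ε * (a i + 2 * b i)
      ≤ ρ * 1 + ∑ _i ∈ Finset.range N, 6 * ε * (1 / 16 + 2 * 1) := by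
        gcongr with i
        exacts [ha i, hb i]
    _ ≤ 1 := by
        rw [Finset.sum_const, Finset.card_range, nsmul_eq_mul]
        have : 0 ≤ ε * N := by positivity
        linarith

theorem IsMarkovDifference.exists_isTiltedDensity (hc : IsContractiveMarkov μ F G N ρ)
    (hξ : IsMarkovDifference μ F G n K ξ) (hN : 0 < N) (hρ₀ : 0 ≤ ρ)
    (hzK : ‖z‖ * K ≤ (1 - ρ) / (40 * N)) :
    ∃ w : ℕ → α → ℂ, (∀ k, n ≤ k → w k = 1) ∧ ∀ k, IsTiltedDensity μ F G z ξ w k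
      ∧ lpNorm (fun ω => w k ω - 1) 2 μ ≤ 1 := by
  have hN_one : (1 : ℝ) ≤ N := Nat.one_le_cast.2 hN
  have hzKN : ‖z‖ * K * (40 * N) ≤ 1 - ρ := (le_div_iff₀ (by positivity)).1 hzK
  have hε : 0 ≤ ‖z‖ * K := mul_nonneg (norm_nonneg z) hξ.bound_nonneg
  have hzK' : ‖z‖ * K ≤ 1 / 16 := by nlinarith
  obtain ⟨w, hwn, hw⟩ := exists_backward_recursion (fun k u ω =>
    (∫ ω', expTilt z (ξ k) u ω' ∂μ)⁻¹ * (μ[expTilt z (ξ k) u | G k]) ω) (1 : α → ℂ) n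
  refine ⟨w, hwn, backward_strong_induction n (fun k hk => ?_) fun k hk ih => ?_⟩
  · refine ⟨hξ.isTiltedDensity_of_le hc.le hwn hk, ?_⟩
    simp [hwn k hk]
  · have hnext := ih (k + 1) k.lt_succ_self
    have hdens : IsTiltedDensity μ F G z ξ w k := by
      refine hξ.isTiltedDensity_of_eq hc.le hc.present_le hnext.1.isBddMeasurable ?_ (hw k hk)
      refine norm_pos_iff.1 (one_half_pos.trans_le ?_)
      exact hξ.half_le_norm_integral_expTilt hc.le hzK' k
        (hnext.1.isBddMeasurable.mono (hc.present_le _)) hnext.1.integral_eq_one hnext.2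
    have hle := IsTiltedDensity.lpNorm_sub_one_le hc hξ hzK'
      (fun j hj => hj.eq_or_lt.elim (fun h => h ▸ hdens) fun h => (ih j h).1)
      fun j hj => (ih j hj).2
    have hξ_le (i : ℕ) : ‖z‖ * lpNorm (ξ (k + i)) 2 μ ≤ 1 / 16 :=
      (mul_le_mul_of_nonneg_left (lpNorm_le_of_ae_norm_le two_ne_zero hξ.bound_nonneg
        (hξ.abs_le _)) (norm_nonneg z)).trans hzK'
    exact ⟨hdens, hle.trans (mul_add_sum_le_one hρ₀ hε hzKN (ih (k + N) (by lia)).2 hξ_le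
      fun i => (ih (k + i + 1) (by lia)).2)⟩

end TiltedDensity

/-! ### The Laplace transform of a martingale as a product -/

section Product

lemma norm_mul_cexp_neg_sub_one_le (l : ℂ) {a : ℂ} (ha : ‖a‖ ≤ 1) :
    ‖l * Complex.exp (-a) - 1‖ ≤ 3 * (‖l - 1 - a‖ + ‖a‖ ^ 2) := by
  have hexp : ‖Complex.exp (-a)‖ ≤ 3 := by
    refine (Complex.norm_exp_le_exp_norm _).trans ((Real.exp_le_exp.2 ?_).trans
      Real.exp_one_lt_three.le)
    rwa [norm_neg]
  have htaylor : ‖Complex.exp (-a) - 1 + a‖ ≤ ‖a‖ ^ 2 := by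
    simpa using Complex.norm_exp_sub_one_sub_id_le (x := -a) (by rwa [norm_neg])
  have hone : ‖1 + a‖ ≤ 2 := (norm_add_le _ _).trans (by rw [norm_one]; linarith)
  calc ‖l * Complex.exp (-a) - 1‖
      = ‖(l - 1 - a) * Complex.exp (-a) + ((1 + a) * (Complex.exp (-a) - 1 + a) - a ^ 2)‖ := by
        ring_nf
    _ ≤ ‖l - 1 - a‖ * ‖Complex.exp (-a)‖ + (‖1 + a‖ * ‖Complex.exp (-a) - 1 + a‖ + ‖a‖ ^ 2) := by
        rw [← norm_mul, ← norm_mul, ← norm_pow]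
        exact (norm_add_le _ _).trans (add_le_add_right (norm_sub_le _ _) _)
    _ ≤ ‖l - 1 - a‖ * 3 + (2 * ‖a‖ ^ 2 + ‖a‖ ^ 2) := by gcongr
    _ = 3 * (‖l - 1 - a‖ + ‖a‖ ^ 2) := by ring

lemma norm_prod_sub_cexp_sum_le {ι : Type*} (t : Finset ι) (l a : ι → ℂ) {τ : ℝ}
    (hτ : ∑ i ∈ t, ‖l i * Complex.exp (-a i) - 1‖ ≤ τ) :
    ‖∏ i ∈ t, l i - Complex.exp (∑ i ∈ t, a i)‖
      ≤ ‖Complex.exp (∑ i ∈ t, a i)‖ * (τ * Real.exp τ) := by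
  have hprod := (t.norm_prod_one_add_sub_one_le fun i => l i * Complex.exp (-a i) - 1).trans
    (sub_le_sub_right (Real.exp_le_exp.2 hτ) 1)
  have hexp : Real.exp τ - 1 ≤ τ * Real.exp τ := by
    have := mul_le_mul_of_nonneg_right (Real.one_sub_le_exp_neg τ) (Real.exp_pos τ).le
    rw [← Real.exp_add, neg_add_cancel, Real.exp_zero] at this
    linarith
  have hfactor : ∏ i ∈ t, l i - Complex.exp (∑ i ∈ t, a i) = Complex.exp (∑ i ∈ t, a i)
      * (∏ i ∈ t, (1 + (l i * Complex.exp (-a i) - 1)) - 1) := by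
    have hcancel (i : ι) : Complex.exp (a i) * (l i * Complex.exp (-a i)) = l i := by
      rw [mul_left_comm, ← Complex.exp_add, add_neg_cancel, Complex.exp_zero, mul_one]
    simp only [add_sub_cancel, mul_sub, mul_one, Complex.exp_sum, ← Finset.prod_mul_distrib,
      hcancel]
  rw [hfactor, norm_mul]
  gcongr
  exact hprod.trans hexp

variable {α : Type*} {m₀ : MeasurableSpace α} {μ : Measure α}
  {F G : ℕ → MeasurableSpace α} {n : ℕ} {K : ℝ} {ξ : ℕ → α → ℝ} {w : ℕ → α → ℂ} {z : ℂ}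

namespace IsMarkovDifference

lemma isBddMeasurable_sum (hξ : IsMarkovDifference μ F G n K ξ) (hF : Monotone F) (j : ℕ) :
    IsBddMeasurable μ (F j) fun ω => ∑ i ∈ Finset.range j, ξ i ω :=
  .sum _ fun i hi => (hξ.isBddMeasurable i).mono (hF (Finset.mem_range.1 hi))

variable [IsProbabilityMeasure μ]

theorem variance_sum (hξ : IsMarkovDifference μ F G n K ξ) (hF : Monotone F)
    (hF_le : ∀ k, F k ≤ m₀) (j : ℕ) :
    variance (fun ω => ∑ i ∈ Finset.range j, ξ i ω) μ
      = ∑ i ∈ Finset.range j, lpNorm (ξ i) 2 μ ^ 2 := by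
  induction j with
  | zero => simp [variance_zero, ← Pi.zero_def]
  | succ j ih =>
    have hsum := hξ.isBddMeasurable_sum hF j
    have hξj := (hξ.isBddMeasurable j).mono (hF_le _)
    have hcov : covariance (fun ω => ∑ i ∈ Finset.range j, ξ i ω) (ξ j) μ = 0 := by
      have hcond := hsum.condExp_mul_left hξj (hF_le j)
      have hprod : ∫ ω, (∑ i ∈ Finset.range j, ξ i ω) * ξ j ω ∂μ = 0 := by
        rw [← integral_condExp (hF_le j), integral_congr_ae hcond]
        refine integral_eq_zero_of_ae ?_
        filter_upwards [hξ.condExp_ae_eq_zero j] with ω hω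
        simp [hω]
      rw [covariance_eq_sub ((hsum.mono (hF_le j)).memLp le_rfl) (hξj.memLp le_rfl),
        hξ.integral_eq_zero hF_le j, mul_zero, sub_zero]
      exact hprod
    simp only [Finset.sum_range_succ]
    rw [variance_fun_add ((hsum.mono (hF_le j)).memLp le_rfl) (hξj.memLp le_rfl), hcov, ih,
      variance_of_integral_eq_zero hξj.stronglyMeasurable.aemeasurable
        (hξ.integral_eq_zero hF_le j), lpNorm_two_sq (hξj.memLp le_rfl (p := 2)).1]
    simp

theorem integral_cexp_sum_mul_eq_prod (hξ : IsMarkovDifference μ F G n K ξ) (hF : Monotone F)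
    (hF_le : ∀ k, F k ≤ m₀) (hG : ∀ k, G k ≤ m₀) (hw : ∀ k, IsTiltedDensity μ F G z ξ w k)
    (j : ℕ) :
    ∫ ω, Complex.exp (z * (∑ i ∈ Finset.range j, ξ i ω : ℝ)) * w j ω ∂μ
      = ∏ i ∈ Finset.range j, ∫ ω, expTilt z (ξ i) (w (i + 1)) ω ∂μ := by
  induction j with
  | zero => simp [(hw 0).integral_eq_one]
  | succ j ih =>
    set lam := ∫ ω, expTilt z (ξ j) (w (j + 1)) ω ∂μ
    have hexp : IsBddMeasurable μ (F j) fun ω =>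
        Complex.exp (z * (∑ i ∈ Finset.range j, ξ i ω : ℝ)) :=
      ((IsBddMeasurable.const z).mul (hξ.isBddMeasurable_sum hF j).ofReal).cexp
    have htilt : IsBddMeasurable μ m₀ (expTilt z (ξ j) (w (j + 1))) :=
      ((hξ.isBddMeasurable j).mono (hF_le _)).expTilt ((hw (j + 1)).isBddMeasurable.mono (hG _)) z
    have hsplit : (fun ω => Complex.exp (z * (∑ i ∈ Finset.range (j + 1), ξ i ω : ℝ)) * w (j + 1) ω)
        = fun ω => Complex.exp (z * (∑ i ∈ Finset.range j, ξ i ω : ℝ))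
          * expTilt z (ξ j) (w (j + 1)) ω := by
      ext ω
      rw [expTilt, ← mul_assoc, ← Complex.exp_add, ← mul_add, Finset.sum_range_succ]
      push_cast
      rfl
    have hcond : μ[fun ω => Complex.exp (z * (∑ i ∈ Finset.range j, ξ i ω : ℝ))
          * expTilt z (ξ j) (w (j + 1)) ω | F j]
        =ᵐ[μ] fun ω => Complex.exp (z * (∑ i ∈ Finset.range j, ξ i ω : ℝ)) * w j ω * lam := by
      filter_upwards [hexp.condExp_mul_left htilt (hF_le j), (hw j).condExp_ae_eq] with ω hω hω'
      rw [hω, hω', mul_assoc, mul_comm lam]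
    rw [hsplit, ← integral_condExp (hF_le j), integral_congr_ae hcond, integral_mul_const, ih,
      Finset.prod_range_succ]

end IsMarkovDifference

end Product

/-! ### Square summability of the densities -/

section L2Norm

/-- The Euclidean norm of the first `n` terms of a sequence. -/
def l2Norm (n : ℕ) (f : ℕ → ℝ) : ℝ :=
  ‖WithLp.toLp 2 fun k : Fin n => f k‖

variable {n N : ℕ} {f g R a : ℕ → ℝ} {ρ b : ℝ}

lemma l2Norm_nonneg : 0 ≤ l2Norm n f := norm_nonneg _

lemma l2Norm_eq_sqrt (n : ℕ) (f : ℕ → ℝ) : l2Norm n f = √(∑ k ∈ Finset.range n, f k ^ 2) := by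
  simp [l2Norm, EuclideanSpace.norm_eq, Finset.sum_range]

lemma l2Norm_mono (h : ∀ k, |f k| ≤ g k) : l2Norm n f ≤ l2Norm n g := by
  rw [l2Norm_eq_sqrt, l2Norm_eq_sqrt]
  exact Real.sqrt_le_sqrt
    (Finset.sum_le_sum fun k _ => sq_le_sq.2 ((h k).trans (le_abs_self _)))

lemma l2Norm_add_le : l2Norm n (fun k => f k + g k) ≤ l2Norm n f + l2Norm n g :=
  norm_add_le (WithLp.toLp 2 fun k : Fin n => f k) (WithLp.toLp 2 fun k : Fin n => g k)

lemma l2Norm_sum_le {ι : Type*} (t : Finset ι) (f : ι → ℕ → ℝ) :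
    l2Norm n (fun k => ∑ i ∈ t, f i k) ≤ ∑ i ∈ t, l2Norm n (f i) := by
  have hsum := norm_sum_le t fun i => WithLp.toLp 2 fun k : Fin n => f i k
  rwa [← WithLp.toLp_sum, Finset.sum_fn] at hsum

lemma l2Norm_const_mul (hb : 0 ≤ b) : l2Norm n (fun k => b * f k) = b * l2Norm n f := by
  have hsmul := norm_smul b (WithLp.toLp 2 fun k : Fin n => f k)
  rwa [Real.norm_of_nonneg hb] at hsmul

lemma l2Norm_shift_le (hf : ∀ k, n ≤ k → f k = 0) (i : ℕ) :
    l2Norm n (fun k => f (k + i)) ≤ l2Norm n f := by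
  rw [l2Norm_eq_sqrt, l2Norm_eq_sqrt]
  refine Real.sqrt_le_sqrt ?_
  have hleft := Finset.sum_range_add (fun k => f k ^ 2) i n
  have hright := Finset.sum_range_add (fun k => f k ^ 2) n i
  have hzero : ∑ k ∈ Finset.range i, f (n + k) ^ 2 = 0 :=
    Finset.sum_eq_zero fun k _ => by simp [hf (n + k) (Nat.le_add_right n k)]
  have hnonneg : 0 ≤ ∑ k ∈ Finset.range i, f k ^ 2 := Finset.sum_nonneg fun k _ => sq_nonneg _
  simp only [add_comm i] at hleft
  linarith

theorem l2Norm_le_of_recursion (hR : ∀ k, 0 ≤ R k) (hRn : ∀ k, n ≤ k → R k = 0)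
    (han : ∀ k, n ≤ k → a k = 0) (hρ₀ : 0 ≤ ρ) (hρ : ρ < 1) (hb : 0 ≤ b)
    (hbN : 4 * b * N ≤ 1 - ρ)
    (hrec : ∀ k, R k ≤ ρ * R (k + N)
      + ∑ i ∈ Finset.range N, b * (a (k + i) + 2 * R (k + i + 1))) :
    l2Norm n R ≤ 2 * b * N / (1 - ρ) * l2Norm n a := by
  have hterm (i : ℕ) : l2Norm n (fun k => b * (a (k + i) + 2 * R (k + i + 1)))
      ≤ b * (l2Norm n a + 2 * l2Norm n R) := by
    rw [l2Norm_const_mul hb]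
    gcongr
    refine l2Norm_add_le.trans (add_le_add (l2Norm_shift_le han i) ?_)
    rw [l2Norm_const_mul zero_le_two]
    exact mul_le_mul_of_nonneg_left (l2Norm_shift_le hRn (i + 1)) zero_le_two
  have hnorm : l2Norm n R ≤ ρ * l2Norm n R + N * (b * (l2Norm n a + 2 * l2Norm n R)) :=
    calc l2Norm n R
        ≤ l2Norm n fun k => ρ * R (k + N)
          + ∑ i ∈ Finset.range N, b * (a (k + i) + 2 * R (k + i + 1)) :=
          l2Norm_mono fun k => (abs_of_nonneg (hR k)).trans_le (hrec k)
      _ ≤ ρ * l2Norm n R + ∑ _i ∈ Finset.range N, b * (l2Norm n a + 2 * l2Norm n R) := by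
          refine l2Norm_add_le.trans (add_le_add ?_ ?_)
          · rw [l2Norm_const_mul hρ₀]
            exact mul_le_mul_of_nonneg_left (l2Norm_shift_le hRn N) hρ₀
          · exact (l2Norm_sum_le _ _).trans (Finset.sum_le_sum fun i _ => hterm i)
      _ = ρ * l2Norm n R + N * (b * (l2Norm n a + 2 * l2Norm n R)) := by simp
  have habsorb := mul_le_mul_of_nonneg_right hbN (l2Norm_nonneg (n := n) (f := R))
  rw [div_mul_eq_mul_div, le_div_iff₀ (sub_pos.2 hρ)]
  linarith

end L2Norm

/-! ### Laplace transforms of sums along a contractive chain -/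

section LaplaceTransform

lemma sum_mul_succ_le_l2Norm_mul_l2Norm {f g : ℕ → ℝ} {n : ℕ} (hg : ∀ k, n ≤ k → g k = 0) :
    ∑ k ∈ Finset.range n, f k * g (k + 1) ≤ l2Norm n f * l2Norm n g := by
  refine (Real.sum_mul_le_sqrt_mul_sqrt _ f fun k => g (k + 1)).trans ?_
  rw [← l2Norm_eq_sqrt, ← l2Norm_eq_sqrt n fun k => g (k + 1)]
  exact mul_le_mul_of_nonneg_left (l2Norm_shift_le hg 1) l2Norm_nonneg

lemma one_sub_div_le_one {ρ : ℝ} {N : ℕ} (hN : 0 < N) (hρ₀ : 0 ≤ ρ) :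
    (1 - ρ) / (40 * N) ≤ 1 := by
  refine (div_le_one (by positivity)).2 ?_
  have : (1 : ℝ) ≤ N := Nat.one_le_cast.2 hN
  linarith

lemma norm_sq_mul_sq_div_two_le {z : ℂ} {s K : ℝ} (hs : 0 ≤ s) (hsK : s ≤ K) (hzK : ‖z‖ * K ≤ 1) :
    ‖z ^ 2 * (s : ℂ) ^ 2 / 2‖ ≤ 1 ∧ ‖z ^ 2 * (s : ℂ) ^ 2 / 2‖ ^ 2 ≤ K * ‖z‖ ^ 3 * s ^ 2 := by
  have hK : 0 ≤ K := hs.trans hsK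
  have hzs : ‖z‖ * s ≤ 1 := (mul_le_mul_of_nonneg_left hsK (norm_nonneg z)).trans hzK
  have hzs₀ : 0 ≤ ‖z‖ * s := by positivity
  have hnorm : ‖z ^ 2 * (s : ℂ) ^ 2 / 2‖ = (‖z‖ * s) ^ 2 / 2 := by
    simp [abs_of_nonneg hs, mul_pow]
  rw [hnorm]
  refine ⟨by nlinarith, ?_⟩
  calc ((‖z‖ * s) ^ 2 / 2) ^ 2 = s * (‖z‖ ^ 3 * s ^ 2) * (‖z‖ * s) / 4 := by ring
    _ ≤ K * (‖z‖ ^ 3 * s ^ 2) * 1 / 4 := by gcongr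
    _ ≤ K * ‖z‖ ^ 3 * s ^ 2 := by
        have : 0 ≤ K * (‖z‖ ^ 3 * s ^ 2) := mul_nonneg hK (by positivity)
        linarith

variable {α : Type*} {m₀ : MeasurableSpace α} {μ : Measure α} [IsProbabilityMeasure μ]
  {F G : ℕ → MeasurableSpace α} {N n : ℕ} {ρ K C : ℝ} {ξ Y : ℕ → α → ℝ} {w : ℕ → α → ℂ} {z : ℂ}

namespace IsMarkovDifference

lemma sum_lpNorm_mul_lpNorm_sub_one_le (hc : IsContractiveMarkov μ F G N ρ)
    (hξ : IsMarkovDifference μ F G n K ξ) (hN : 0 < N) (hρ₀ : 0 ≤ ρ) (hρ : ρ < 1)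
    (hzK : ‖z‖ * K ≤ (1 - ρ) / (40 * N)) (hwn : ∀ k, n ≤ k → w k = 1)
    (hw : ∀ k, IsTiltedDensity μ F G z ξ w k)
    (hR : ∀ k, lpNorm (fun ω => w k ω - 1) 2 μ ≤ 1) :
    ∑ k ∈ Finset.range n, lpNorm (ξ k) 2 μ * lpNorm (fun ω => w (k + 1) ω - 1) 2 μ
      ≤ 12 * N / (1 - ρ) * ‖z‖ ^ 2 * K * ∑ k ∈ Finset.range n, lpNorm (ξ k) 2 μ ^ 2 := by
  have hN_one : (1 : ℝ) ≤ N := Nat.one_le_cast.2 hN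
  have hzKN : ‖z‖ * K * (40 * N) ≤ 1 - ρ := (le_div_iff₀ (by positivity)).1 hzK
  have hε : 0 ≤ ‖z‖ * K := mul_nonneg (norm_nonneg z) hξ.bound_nonneg
  have hRn (k : ℕ) (hk : n ≤ k) : lpNorm (fun ω => w k ω - 1) 2 μ = 0 := by simp [hwn k hk]
  have hsn (k : ℕ) (hk : n ≤ k) : ‖z‖ * lpNorm (ξ k) 2 μ = 0 := by simp [hξ.eq_zero k hk]
  have hl2 := l2Norm_le_of_recursion (R := fun k => lpNorm (fun ω => w k ω - 1) 2 μ)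
    (a := fun k => ‖z‖ * lpNorm (ξ k) 2 μ) (b := 6 * (‖z‖ * K)) (N := N) (fun _ => lpNorm_nonneg)
    hRn hsn hρ₀ hρ (by positivity) (by nlinarith) fun k =>
      IsTiltedDensity.lpNorm_sub_one_le hc hξ (by nlinarith) (fun j _ => hw j) fun j _ => hR j
  rw [l2Norm_const_mul (norm_nonneg z)] at hl2
  have hsq : l2Norm n (fun k => lpNorm (ξ k) 2 μ) ^ 2
      = ∑ k ∈ Finset.range n, lpNorm (ξ k) 2 μ ^ 2 := by
    rw [l2Norm_eq_sqrt, Real.sq_sqrt (Finset.sum_nonneg fun _ _ => sq_nonneg _)]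
  calc ∑ k ∈ Finset.range n, lpNorm (ξ k) 2 μ * lpNorm (fun ω => w (k + 1) ω - 1) 2 μ
      ≤ l2Norm n (fun k => lpNorm (ξ k) 2 μ) * l2Norm n fun k => lpNorm (fun ω => w k ω - 1) 2 μ :=
        sum_mul_succ_le_l2Norm_mul_l2Norm hRn
    _ ≤ l2Norm n (fun k => lpNorm (ξ k) 2 μ) * (2 * (6 * (‖z‖ * K)) * N / (1 - ρ)
          * (‖z‖ * l2Norm n fun k => lpNorm (ξ k) 2 μ)) :=
        mul_le_mul_of_nonneg_left hl2 l2Norm_nonneg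
    _ = 12 * N / (1 - ρ) * ‖z‖ ^ 2 * K * ∑ k ∈ Finset.range n, lpNorm (ξ k) 2 μ ^ 2 := by
        rw [← hsq]
        ring

lemma sum_norm_integral_expTilt_sub_le (hc : IsContractiveMarkov μ F G N ρ)
    (hξ : IsMarkovDifference μ F G n K ξ) (hN : 0 < N) (hρ₀ : 0 ≤ ρ) (hρ : ρ < 1)
    (hzK : ‖z‖ * K ≤ (1 - ρ) / (40 * N)) (hwn : ∀ k, n ≤ k → w k = 1)
    (hw : ∀ k, IsTiltedDensity μ F G z ξ w k)
    (hR : ∀ k, lpNorm (fun ω => w k ω - 1) 2 μ ≤ 1) :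
    ∑ k ∈ Finset.range n,
        ‖∫ ω, expTilt z (ξ k) (w (k + 1)) ω ∂μ - 1 - z ^ 2 * lpNorm (ξ k) 2 μ ^ 2 / 2‖
      ≤ (1 + 24 * N / (1 - ρ)) * K * ‖z‖ ^ 3 * ∑ k ∈ Finset.range n, lpNorm (ξ k) 2 μ ^ 2 := by
  have hzK' := hzK.trans (one_sub_div_le_one hN hρ₀)
  have hcross := hξ.sum_lpNorm_mul_lpNorm_sub_one_le hc hN hρ₀ hρ hzK hwn hw hR
  calc ∑ k ∈ Finset.range n,
        ‖∫ ω, expTilt z (ξ k) (w (k + 1)) ω ∂μ - 1 - z ^ 2 * lpNorm (ξ k) 2 μ ^ 2 / 2‖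
      ≤ ∑ k ∈ Finset.range n, (‖z‖ ^ 3 * K * lpNorm (ξ k) 2 μ ^ 2
          + 2 * ‖z‖ * (lpNorm (ξ k) 2 μ * lpNorm (fun ω => w (k + 1) ω - 1) 2 μ)) :=
        Finset.sum_le_sum fun k _ => by
          simpa only [mul_assoc] using
            norm_integral_expTilt_sub_le ((hξ.isBddMeasurable k).mono (hc.le _))
              ((hw (k + 1)).isBddMeasurable.mono (hc.present_le _)) (hξ.abs_le k) hzK'
              (hξ.integral_eq_zero hc.le k) (hw (k + 1)).integral_eq_one
    _ ≤ ‖z‖ ^ 3 * K * ∑ k ∈ Finset.range n, lpNorm (ξ k) 2 μ ^ 2 + 2 * ‖z‖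
          * (12 * N / (1 - ρ) * ‖z‖ ^ 2 * K * ∑ k ∈ Finset.range n, lpNorm (ξ k) 2 μ ^ 2) := by
        rw [Finset.sum_add_distrib, ← Finset.mul_sum, ← Finset.mul_sum]
        gcongr
    _ = (1 + 24 * N / (1 - ρ)) * K * ‖z‖ ^ 3 * ∑ k ∈ Finset.range n, lpNorm (ξ k) 2 μ ^ 2 := by
        ring

theorem norm_integral_cexp_sum_sub_le (hc : IsContractiveMarkov μ F G N ρ)
    (hξ : IsMarkovDifference μ F G n K ξ) (hN : 0 < N) (hρ₀ : 0 ≤ ρ) (hρ : ρ < 1)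
    (hzK : ‖z‖ * K ≤ (1 - ρ) / (40 * N)) {V τ : ℝ}
    (hV : V = variance (fun ω => ∑ k ∈ Finset.range n, ξ k ω) μ)
    (hτ : (6 + 72 * N / (1 - ρ)) * K * ‖z‖ ^ 3 * V ≤ τ) :
    ‖∫ ω, Complex.exp (z * (∑ k ∈ Finset.range n, ξ k ω : ℝ)) ∂μ - Complex.exp (z ^ 2 * V / 2)‖
      ≤ ‖Complex.exp (z ^ 2 * V / 2)‖ * (τ * Real.exp τ) := by
  rw [hξ.variance_sum hc.monotone hc.le] at hV
  have hzK' := hzK.trans (one_sub_div_le_one hN hρ₀)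
  obtain ⟨w, hwn, hw⟩ := hξ.exists_isTiltedDensity hc hN hρ₀ hzK
  have hprod := hξ.integral_cexp_sum_mul_eq_prod hc.monotone hc.le hc.present_le
    (fun k => (hw k).1) n
  simp only [hwn n le_rfl, Pi.one_apply, mul_one] at hprod
  have hsum : z ^ 2 * V / 2 = ∑ k ∈ Finset.range n, z ^ 2 * (lpNorm (ξ k) 2 μ : ℂ) ^ 2 / 2 := by
    rw [hV, ← Finset.sum_div, ← Finset.mul_sum]
    push_cast
    rfl
  rw [hprod, hsum]
  refine norm_prod_sub_cexp_sum_le _ _ _ (le_trans ?_ hτ)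
  have hsq (k : ℕ) : ‖z ^ 2 * (lpNorm (ξ k) 2 μ : ℂ) ^ 2 / 2‖ ≤ 1
      ∧ ‖z ^ 2 * (lpNorm (ξ k) 2 μ : ℂ) ^ 2 / 2‖ ^ 2 ≤ K * ‖z‖ ^ 3 * lpNorm (ξ k) 2 μ ^ 2 :=
    norm_sq_mul_sq_div_two_le lpNorm_nonneg
      (lpNorm_le_of_ae_norm_le two_ne_zero hξ.bound_nonneg (hξ.abs_le k)) hzK'
  calc ∑ k ∈ Finset.range n, ‖(∫ ω, expTilt z (ξ k) (w (k + 1)) ω ∂μ)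
          * Complex.exp (-(z ^ 2 * (lpNorm (ξ k) 2 μ : ℂ) ^ 2 / 2)) - 1‖
      ≤ ∑ k ∈ Finset.range n, 3 * (‖∫ ω, expTilt z (ξ k) (w (k + 1)) ω ∂μ - 1
          - z ^ 2 * lpNorm (ξ k) 2 μ ^ 2 / 2‖ + K * ‖z‖ ^ 3 * lpNorm (ξ k) 2 μ ^ 2) :=
        Finset.sum_le_sum fun k _ => (norm_mul_cexp_neg_sub_one_le _ (hsq k).1).trans (by
          gcongr
          exact (hsq k).2)
    _ ≤ 3 * ((1 + 24 * N / (1 - ρ)) * K * ‖z‖ ^ 3 * V + K * ‖z‖ ^ 3 * V) := by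
        rw [← Finset.mul_sum, Finset.sum_add_distrib, ← Finset.mul_sum, ← hV]
        gcongr
        exact hV ▸ hξ.sum_norm_integral_expTilt_sub_le hc hN hρ₀ hρ hzK hwn
          (fun k => (hw k).1) fun k => (hw k).2
    _ = (6 + 72 * N / (1 - ρ)) * K * ‖z‖ ^ 3 * V := by ring

end IsMarkovDifference

lemma mul_le_one_sub_div_of_mul_le_one {t : ℝ} (hN : 0 < N) (hρ : ρ < 1) (hK : 0 ≤ K) (ht : 0 ≤ t)
    (h : ((6 + 72 * N / (1 - ρ)) * K + 1) * t ≤ 1) : t * K ≤ (1 - ρ) / (40 * N) := by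
  have hρ' : 0 < 1 - ρ := sub_pos.2 hρ
  rw [le_div_iff₀ (by positivity), ← div_le_one hρ']
  refine le_trans ?_ h
  have hnonneg : 0 ≤ 6 * K * t + 32 * N / (1 - ρ) * K * t + t := by positivity
  calc t * K * (40 * N) / (1 - ρ)
      = ((6 + 72 * N / (1 - ρ)) * K + 1) * t - (6 * K * t + 32 * N / (1 - ρ) * K * t + t) := by ring
    _ ≤ _ := sub_le_self _ hnonneg

theorem IsContractiveMarkov.exists_norm_integral_cexp_sub_le (hc : IsContractiveMarkov μ F G N ρ)
    (hN : 0 < N) (hρ₀ : 0 ≤ ρ) (hρ : ρ < 1) (hC : 0 ≤ C)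
    (hY : ∀ k, IsBddMeasurable μ (G (k + 1)) (Y k)) (hYC : ∀ k, ∀ᵐ ω ∂μ, |Y k ω| ≤ C) :
    ∃ L : ℝ, 0 < L ∧ ∀ (n : ℕ) (z : ℂ), L * ‖z‖ ≤ 1 → ∀ S : α → ℝ,
      (∀ ω, S ω = ∑ k ∈ Finset.range n, Y k ω) →
      ‖∫ ω, Complex.exp (z * (S ω - ∫ ω', S ω' ∂μ : ℝ)) ∂μ - Complex.exp (z ^ 2 * variance S μ / 2)‖
        ≤ ‖Complex.exp (z ^ 2 * variance S μ / 2)‖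
          * (L * ‖z‖ ^ 3 * variance S μ * Real.exp (L * ‖z‖ ^ 3 * variance S μ)) := by
  have : 0 < 1 - ρ := sub_pos.2 hρ
  set K : ℝ := 2 * (C + N * C / (1 - ρ))
  have hK : 0 ≤ K := by positivity
  refine ⟨(6 + 72 * N / (1 - ρ)) * K + 1, by positivity, fun n z hz S hS => ?_⟩
  obtain ⟨ξ, hξ, hsum⟩ := hc.exists_isMarkovDifference (n := n)
    (Y := fun k => if k < n then Y k else 0) hN hρ hC
    (fun k => by split_ifs; exacts [hY k, .const 0])
    (fun k => by split_ifs; exacts [hYC k, by simp [hC]]) (fun k hk => if_neg hk.not_gt)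
  have htrunc (ω : α) : ∑ k ∈ Finset.range n, (if k < n then Y k else 0) ω = S ω := by
    rw [hS]
    exact Finset.sum_congr rfl fun k hk => by rw [if_pos (Finset.mem_range.1 hk)]
  simp only [htrunc] at hsum
  have hSm : AEStronglyMeasurable S μ := by
    rw [funext hS]
    exact ((IsBddMeasurable.sum _ fun k _ => (hY k).mono (hc.present_le _)).stronglyMeasurable
      (m := m₀)).aestronglyMeasurable
  have hzK := mul_le_one_sub_div_of_mul_le_one hN hρ hK (norm_nonneg z) hz
  have hvar : variance S μ = variance (fun ω => ∑ k ∈ Finset.range n, ξ k ω) μ := by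
    simp only [hsum, variance_sub_const hSm]
  have hτ : (6 + 72 * N / (1 - ρ)) * K * ‖z‖ ^ 3 * variance S μ
      ≤ ((6 + 72 * N / (1 - ρ)) * K + 1) * ‖z‖ ^ 3 * variance S μ := by
    have := variance_nonneg S μ
    gcongr
    exact le_add_of_nonneg_right zero_le_one
  simpa only [hsum] using hξ.norm_integral_cexp_sum_sub_le hc hN hρ₀ hρ hzK hvar hτ

end LaplaceTransform

/-! ### Doeblin minorization -/

section Minorization

variable {β : Type*} [MeasurableSpace β] {ν m : Measure β} [IsProbabilityMeasure ν]
  [IsProbabilityMeasure m] {γ R : ℝ}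

lemma exists_integral_eq_add_of_smul_le (hγ : 0 ≤ γ) (h : ENNReal.ofReal γ • m ≤ ν) :
    ∃ τ ≤ ν, IsFiniteMeasure τ ∧ τ.real Set.univ = 1 - γ ∧
      ∀ {E : Type} [NormedAddCommGroup E] [NormedSpace ℝ E] (g : β → E), StronglyMeasurable g →
        (∀ y, ‖g y‖ ≤ R) → ∫ y, g y ∂ν = ∫ y, g y ∂τ + γ • ∫ y, g y ∂m := by
  have hfin : IsFiniteMeasure (ENNReal.ofReal γ • m) := isFiniteMeasure_of_le ν h
  have hadd : ν - ENNReal.ofReal γ • m + ENNReal.ofReal γ • m = ν := Measure.sub_add_cancel_of_le h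
  have hτ : ν - ENNReal.ofReal γ • m ≤ ν := Measure.sub_le
  have hτfin : IsFiniteMeasure (ν - ENNReal.ofReal γ • m) := isFiniteMeasure_of_le ν hτ
  refine ⟨_, hτ, hτfin, ?_, fun {E} _ _ g hg hR => ?_⟩
  · have hmass : (ν - ENNReal.ofReal γ • m + ENNReal.ofReal γ • m).real Set.univ = 1 := by
      rw [hadd, probReal_univ]
    rw [measureReal_add_apply, measureReal_ennreal_smul_apply, probReal_univ (μ := m),
      ENNReal.toReal_ofReal hγ, mul_one] at hmass
    exact eq_sub_of_add_eq hmass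
  · have hint (τ : Measure β) [IsFiniteMeasure τ] : Integrable g τ :=
      .of_bound hg.aestronglyMeasurable R (ae_of_all _ hR)
    nth_rw 1 [← hadd]
    rw [integral_add_measure (hint _) (hint _), integral_smul_measure, ENNReal.toReal_ofReal hγ]

lemma abs_integral_sub_le_of_smul_le (hγ : 0 ≤ γ) (h : ENNReal.ofReal γ • m ≤ ν) {g : β → ℝ}
    (hg : StronglyMeasurable g) {c : ℝ} (hR : ∀ y, |g y - c| ≤ R) :
    |∫ y, g y ∂ν - (γ * ∫ y, g y ∂m + (1 - γ) * c)| ≤ (1 - γ) * R := by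
  obtain ⟨τ, -, hτ, hmass, hsplit⟩ := exists_integral_eq_add_of_smul_le (R := |c| + R) hγ h
  have hbound (y : β) : ‖g y‖ ≤ |c| + R := by
    linarith [norm_le_norm_add_norm_sub' (g y) c, Real.norm_eq_abs c, Real.norm_eq_abs (g y - c),
      hR y]
  have hint : Integrable g τ := .of_bound hg.aestronglyMeasurable _ (ae_of_all _ hbound)
  have hcentre : ∫ y, g y ∂ν - (γ * ∫ y, g y ∂m + (1 - γ) * c) = ∫ y, (g y - c) ∂τ := by
    rw [hsplit g hg hbound, integral_sub hint (integrable_const c), integral_const, hmass]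
    simp only [smul_eq_mul]
    ring
  rw [hcentre, mul_comm, ← hmass]
  exact norm_integral_le_of_norm_le_const (f := fun y => g y - c) (ae_of_all _ hR)

lemma norm_integral_sub_sq_le_of_smul_le (hγ : 0 ≤ γ) (h : ENNReal.ofReal γ • m ≤ ν) {g : β → ℂ}
    (hg : StronglyMeasurable g) (hR : ∀ y, ‖g y‖ ≤ R) :
    ‖∫ y, g y ∂ν - γ • ∫ y, g y ∂m‖ ^ 2 ≤ (1 - γ) * ∫ y, ‖g y‖ ^ 2 ∂ν := by
  obtain ⟨τ, hτν, hτ, hmass, hsplit⟩ := exists_integral_eq_add_of_smul_le (R := R) hγ h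
  have hLp (τ' : Measure β) [IsFiniteMeasure τ'] : MemLp g 2 τ' :=
    .of_bound hg.aestronglyMeasurable R (ae_of_all _ hR)
  have hcs := norm_integral_mul_le_lpNorm_mul_lpNorm (memLp_const (1 : ℂ)) (hLp τ)
  have hone : lpNorm (fun _ : β => (1 : ℂ)) 2 τ ^ 2 = 1 - γ := by
    rw [lpNorm_two_sq aestronglyMeasurable_const]
    simpa using hmass
  simp only [one_mul] at hcs
  calc ‖∫ y, g y ∂ν - γ • ∫ y, g y ∂m‖ ^ 2
      = ‖∫ y, g y ∂τ‖ ^ 2 := by rw [hsplit g hg hR, add_sub_cancel_right]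
    _ ≤ (1 - γ) * ∫ y, ‖g y‖ ^ 2 ∂τ := by
        rw [← hone, ← lpNorm_two_sq hg.aestronglyMeasurable, ← mul_pow]
        exact pow_le_pow_left₀ (norm_nonneg _) hcs 2
    _ ≤ (1 - γ) * ∫ y, ‖g y‖ ^ 2 ∂ν :=
        mul_le_mul_of_nonneg_left (integral_mono_measure hτν (ae_of_all _ fun y => by positivity)
          (hLp ν).integrable_norm_pow') (hmass ▸ measureReal_nonneg)

end Minorization

section CondKernel

/-- `κ (X ω)` is the conditional law of `Y` given the σ-algebra `mF`. -/
structure HasCondKernel {α A B : Type*} [MeasurableSpace A] [MeasurableSpace B]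
    {m₀ : MeasurableSpace α} (μ : Measure α) (mF : MeasurableSpace α) (X : α → A) (Y : α → B)
    (κ : Kernel A B) : Prop where
  le : mF ≤ m₀
  measurable_left : Measurable[mF] X
  measurable_right : Measurable[m₀] Y
  condExp_indicator : ∀ Γ, MeasurableSet Γ →
    μ[fun ω => Γ.indicator (fun _ => (1 : ℝ)) (Y ω) | mF] =ᵐ[μ] fun ω => (κ (X ω) Γ).toReal

variable {α A B : Type*} {mA : MeasurableSpace A} {mB : MeasurableSpace B}
  {mF m₀ : MeasurableSpace α} {μ : Measure α} {X : α → A} {Y : α → B} {κ : Kernel A B} {γ R : ℝ}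

lemma IsBddMeasurable.exists_comp {E : Type*} [NormedAddCommGroup E] [CompleteSpace E] {g : α → E}
    (hg : IsBddMeasurable μ (mB.comap Y) g) (c : E) (hR : ∀ᵐ ω ∂μ, ‖g ω - c‖ ≤ R) (hR₀ : 0 ≤ R) :
    ∃ h : B → E, StronglyMeasurable h ∧ (∀ y, ‖h y - c‖ ≤ R) ∧ g =ᵐ[μ] fun ω => h (Y ω) := by
  classical
  obtain ⟨h, hh, rfl⟩ := hg.stronglyMeasurable.exists_eq_measurable_comp
  have hs : MeasurableSet {y | ‖h y - c‖ ≤ R} :=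
    measurableSet_le (hh.sub stronglyMeasurable_const).norm.measurable measurable_const
  refine ⟨fun y => if ‖h y - c‖ ≤ R then h y else c, hh.ite hs stronglyMeasurable_const,
    fun y => ?_, ?_⟩
  · dsimp only
    split_ifs with hy
    · exact hy
    · simpa using hR₀
  · filter_upwards [hR] with ω hω
    exact (if_pos hω).symm

lemma IsBddMeasurable.exists_bounded_comp {E : Type*} [NormedAddCommGroup E] [CompleteSpace E]
    {g : α → E} (hg : IsBddMeasurable μ (mB.comap Y) g) :
    ∃ (h : B → E) (R : ℝ), StronglyMeasurable h ∧ (∀ y, ‖h y‖ ≤ R) ∧ g =ᵐ[μ] fun ω => h (Y ω) := by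
  obtain ⟨R, hR⟩ := hg.exists_norm_le
  obtain ⟨h, hh, hhR, hgh⟩ := hg.exists_comp (R := max R 0) 0
    (hR.mono fun ω hω => by simpa only [sub_zero] using hω.trans (le_max_left R 0))
    (le_max_right R 0)
  exact ⟨h, max R 0, hh, by simpa only [sub_zero] using hhR, hgh⟩

variable [IsProbabilityMeasure μ] [IsMarkovKernel κ]

lemma lpNorm_two_le_lpNorm_sub_const {g : α → ℂ} (hg : MemLp g 2 μ) (hg₀ : ∫ ω, g ω ∂μ = 0)
    (c : ℂ) : lpNorm g 2 μ ≤ lpNorm (fun ω => g ω - c) 2 μ := by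
  have hint : Integrable g μ := hg.integrable one_le_two
  refine (sq_le_sq₀ lpNorm_nonneg lpNorm_nonneg).1 ?_
  have hsub : AEStronglyMeasurable (fun ω => g ω - c) μ := hg.1.sub aestronglyMeasurable_const
  rw [lpNorm_two_sq hg.1, lpNorm_two_sq hsub]
  have hcross : ∫ ω, inner ℝ (g ω) c ∂μ = 0 := by
    simp only [real_inner_comm c]
    rw [integral_inner hint, hg₀, inner_zero_right]
  have hinner : Integrable (fun ω => 2 * inner ℝ (g ω) c) μ := (hint.inner_const c).const_mul 2
  calc ∫ ω, ‖g ω‖ ^ 2 ∂μ ≤ ∫ ω, ‖g ω‖ ^ 2 ∂μ - 2 * ∫ ω, inner ℝ (g ω) c ∂μ + ‖c‖ ^ 2 := by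
        rw [hcross, mul_zero, sub_zero]
        exact le_add_of_nonneg_right (by positivity)
    _ = ∫ ω, (‖g ω‖ ^ 2 - 2 * inner ℝ (g ω) c + ‖c‖ ^ 2) ∂μ := by
        have hsq : Integrable (fun ω => ‖g ω‖ ^ 2 - 2 * inner ℝ (g ω) c) μ :=
          hg.integrable_norm_pow'.sub hinner
        rw [integral_add hsq (integrable_const _), integral_sub hg.integrable_norm_pow' hinner,
          integral_const_mul, integral_const, probReal_univ, one_smul]
    _ = ∫ ω, ‖g ω - c‖ ^ 2 ∂μ := by simp only [norm_sub_sq_real]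

namespace HasCondKernel

lemma map_restrict (hκ : HasCondKernel μ mF X Y κ) {s : Set α} (hs : MeasurableSet[mF] s) :
    (μ.restrict s).map Y = κ ∘ₘ (μ.restrict s).map X := by
  have hX : Measurable X := hκ.measurable_left.mono hκ.le le_rfl
  ext Γ hΓ
  have hκΓ : AEMeasurable (fun ω => κ (X ω) Γ) (μ.restrict s) :=
    ((κ.measurable_coe hΓ).comp hX).aemeasurable
  have hint : Integrable (fun ω => Γ.indicator (fun _ => (1 : ℝ)) (Y ω)) μ :=
    (integrable_const 1).indicator (hκ.measurable_right hΓ)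
  rw [Measure.bind_apply hΓ κ.aemeasurable, lintegral_map (κ.measurable_coe hΓ) hX,
    Measure.map_apply hκ.measurable_right hΓ]
  have hfin : ∫⁻ ω in s, κ (X ω) Γ ∂μ ≠ ∞ :=
    ((lintegral_mono fun _ => prob_le_one).trans_lt (by simp)).ne
  refine (ENNReal.toReal_eq_toReal_iff' (measure_ne_top _ _) hfin).1 ?_
  calc (μ.restrict s).real (Y ⁻¹' Γ)
      = ∫ ω in s, Γ.indicator (fun _ => (1 : ℝ)) (Y ω) ∂μ :=
        (integral_indicator_one (hκ.measurable_right hΓ)).symm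
    _ = ∫ ω in s, (κ (X ω) Γ).toReal ∂μ := by
        rw [← setIntegral_condExp hκ.le hint hs]
        exact integral_congr_ae (ae_restrict_of_ae (hκ.condExp_indicator Γ hΓ))
    _ = (∫⁻ ω in s, κ (X ω) Γ ∂μ).toReal :=
        integral_toReal hκΓ (ae_of_all _ fun _ => measure_lt_top _ _)

lemma condExp_comp {E : Type*} [NormedAddCommGroup E] [NormedSpace ℝ E] [CompleteSpace E]
    (hκ : HasCondKernel μ mF X Y κ) {g : B → E} (hg : StronglyMeasurable g)
    (hR : ∀ y, ‖g y‖ ≤ R) : μ[fun ω => g (Y ω) | mF] =ᵐ[μ] fun ω => ∫ y, g y ∂κ (X ω) := by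
  have hX : Measurable X := hκ.measurable_left.mono hκ.le le_rfl
  have hP : StronglyMeasurable fun x => ∫ y, g y ∂κ x := hg.integral_kernel
  have hP_le (x : A) : ‖∫ y, g y ∂κ x‖ ≤ R := by
    simpa using norm_integral_le_of_norm_le_const (μ := κ x) (ae_of_all _ hR)
  refine (ae_eq_condExp_of_forall_setIntegral_eq hκ.le ?_ (fun s _ _ => ?_) (fun s hs _ => ?_)
    (hP.comp_measurable hκ.measurable_left).aestronglyMeasurable).symm
  · exact .of_bound (hg.comp_measurable hκ.measurable_right).aestronglyMeasurable R
      (ae_of_all _ fun _ => hR _)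
  · exact Integrable.of_bound (hP.comp_measurable hX).aestronglyMeasurable R
      (ae_of_all _ fun _ => hP_le _)
  · have hint : Integrable g (κ ∘ₘ (μ.restrict s).map X) :=
      .of_bound hg.aestronglyMeasurable R (ae_of_all _ hR)
    calc ∫ ω in s, ∫ y, g y ∂κ (X ω) ∂μ
        = ∫ x, ∫ y, g y ∂κ x ∂(μ.restrict s).map X :=
          (integral_map hX.aemeasurable hP.aestronglyMeasurable).symm
      _ = ∫ y, g y ∂(κ ∘ₘ (μ.restrict s).map X) := by
          rw [Measure.comp_eq_comp_const_apply] at hint ⊢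
          rw [Kernel.integral_comp hint, Kernel.const_apply]
      _ = ∫ ω in s, g (Y ω) ∂μ := by
          rw [← hκ.map_restrict hs,
            integral_map hκ.measurable_right.aemeasurable hg.aestronglyMeasurable]

lemma condExp_ae_eq_condExp_comap {E : Type*} [NormedAddCommGroup E] [NormedSpace ℝ E]
    [CompleteSpace E] (hκ : HasCondKernel μ mF X Y κ) {g : α → E}
    (hg : IsBddMeasurable μ (mB.comap Y) g) : μ[g | mF] =ᵐ[μ] μ[g | mA.comap X] := by
  obtain ⟨h, R, hh, hhR, hgh⟩ := hg.exists_bounded_comp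
  have hκh := (condExp_congr_ae hgh).trans (hκ.condExp_comp hh hhR)
  have hle : mA.comap X ≤ mF := hκ.measurable_left.comap_le
  have hPX : StronglyMeasurable[mA.comap X] fun ω => ∫ y, h y ∂κ (X ω) :=
    (hh.integral_kernel (κ := κ)).comp_measurable (comap_measurable X)
  have htower := (condExp_condExp_of_le (f := g) hle hκ.le).symm.trans (condExp_congr_ae hκh)
  rw [condExp_of_stronglyMeasurable (hle.trans hκ.le) hPX (integrable_condExp.congr hκh)] at htower
  exact hκh.trans htower.symm

variable {m : Measure B} [IsProbabilityMeasure m]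

lemma exists_abs_condExp_sub_le (hκ : HasCondKernel μ mF X Y κ) (hγ : 0 ≤ γ)
    (hm : ∀ x, ENNReal.ofReal γ • m ≤ κ x) {g : α → ℝ} {c : ℝ}
    (hg : IsBddMeasurable μ (mB.comap Y) g) (hR : ∀ᵐ ω ∂μ, |g ω - c| ≤ R) :
    ∃ b : ℝ, ∀ᵐ ω ∂μ, |(μ[g | mF]) ω - b| ≤ (1 - γ) * R := by
  obtain ⟨ω₀, hω₀⟩ := hR.exists
  obtain ⟨h, hh, hhR, hgh⟩ := hg.exists_comp c hR ((abs_nonneg _).trans hω₀)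
  have hbound (y : B) : ‖h y‖ ≤ ‖c‖ + R := by
    linarith [norm_le_norm_add_norm_sub' (h y) c, hhR y]
  refine ⟨γ * ∫ y, h y ∂m + (1 - γ) * c, ?_⟩
  filter_upwards [(condExp_congr_ae hgh).trans (hκ.condExp_comp hh hbound)] with ω hω
  rw [hω]
  exact abs_integral_sub_le_of_smul_le hγ (hm (X ω)) hh hhR

lemma lpNorm_condExp_le (hκ : HasCondKernel μ mF X Y κ) (hγ : 0 ≤ γ)
    (hm : ∀ x, ENNReal.ofReal γ • m ≤ κ x) {g : α → ℂ} (hg : IsBddMeasurable μ (mB.comap Y) g)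
    (hg₀ : ∫ ω, g ω ∂μ = 0) : lpNorm (μ[g | mF]) 2 μ ≤ √(1 - γ) * lpNorm g 2 μ := by
  obtain ⟨h, R, hh, hhR, hgh⟩ := hg.exists_bounded_comp
  have hgF : IsBddMeasurable μ mF (μ[g | mF]) := hg.condExp
  have hκh := (condExp_congr_ae hgh).trans (hκ.condExp_comp hh hhR)
  have hκsq := hκ.condExp_comp (g := fun y => ‖h y‖ ^ 2) (R := R ^ 2) (hh.norm.pow 2)
    fun y => by simpa using pow_le_pow_left₀ (norm_nonneg _) (hhR y) 2
  set b : ℂ := γ • ∫ y, h y ∂m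
  have hpoint : ∀ᵐ ω ∂μ,
      ‖(μ[g | mF]) ω - b‖ ^ 2 ≤ (1 - γ) * (μ[fun ω => ‖h (Y ω)‖ ^ 2 | mF]) ω := by
    filter_upwards [hκh, hκsq] with ω hω hωsq
    rw [hω, hωsq]
    exact norm_integral_sub_sq_le_of_smul_le hγ (hm (X ω)) hh hhR
  have hsq : lpNorm (fun ω => (μ[g | mF]) ω - b) 2 μ ^ 2 ≤ (1 - γ) * lpNorm g 2 μ ^ 2 := by
    calc lpNorm (fun ω => (μ[g | mF]) ω - b) 2 μ ^ 2
        = ∫ ω, ‖(μ[g | mF]) ω - b‖ ^ 2 ∂μ :=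
          lpNorm_two_sq ((hgF.sub (.const b)).memLp hκ.le (p := 2)).1
      _ ≤ ∫ ω, (1 - γ) * (μ[fun ω => ‖h (Y ω)‖ ^ 2 | mF]) ω ∂μ :=
          integral_mono_ae ((hgF.sub (.const b)).memLp hκ.le).integrable_norm_pow'
            (integrable_condExp.const_mul _) hpoint
      _ = (1 - γ) * lpNorm g 2 μ ^ 2 := by
          rw [integral_const_mul, integral_condExp hκ.le, lpNorm_congr_ae hgh]
          exact congrArg _ (lpNorm_two_sq
            (hh.comp_measurable hκ.measurable_right).aestronglyMeasurable).symm
  refine (lpNorm_two_le_lpNorm_sub_const (hgF.memLp hκ.le) (by rwa [integral_condExp hκ.le])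
    b).trans (Real.le_sqrt_of_sq_le hsq |>.trans_eq ?_)
  rw [Real.sqrt_mul' _ (sq_nonneg _), Real.sqrt_sq lpNorm_nonneg]

end HasCondKernel

end CondKernel

section DoeblinChain

/-- The past `σ(X 0, …, X (k - 1))` strictly before time `k`; it is trivial for `k = 0`. -/
@[reducible]
def strictPast {α : Type*} (X : ∀ j, α → 𝒳 j) : ℕ → MeasurableSpace α
  | 0 => ⊥
  | j + 1 => pastSigma X j

/-- The σ-algebra generated by `X (k - 1)`, the last state before time `k`; it is trivial for
`k = 0`. -/
@[reducible]
def lastState {α : Type*} (X : ∀ j, α → 𝒳 j) : ℕ → MeasurableSpace α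
  | 0 => ⊥
  | j + 1 => MeasurableSpace.comap (X j) inferInstance

lemma comap_le_pastSigma {α : Type*} {X : ∀ j, α → 𝒳 j} {i j : ℕ} (hij : i ≤ j) :
    MeasurableSpace.comap (X i) inferInstance ≤ pastSigma X j :=
  le_iSup₂_of_le (f := fun i (_ : i ∈ Finset.range (j + 1)) =>
    MeasurableSpace.comap (X i) inferInstance) i (Finset.mem_range_succ_iff.2 hij) le_rfl

lemma pastSigma_mono {α : Type*} {X : ∀ j, α → 𝒳 j} : Monotone (pastSigma X) := fun _ _ hij =>
  iSup₂_le fun _ hk => comap_le_pastSigma ((Finset.mem_range_succ_iff.1 hk).trans hij)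

variable {μ : Measure Ω} {X : ∀ j, Ω → 𝒳 j} {κ : ∀ j n, Kernel (𝒳 j) (𝒳 (j + n))}

lemma hasCondKernel_of_isInhomMarkov (hX : IsInhomMarkov μ X κ) (j n : ℕ) :
    HasCondKernel μ (pastSigma X j) (X j) (X (j + n)) (κ j n) where
  le := iSup₂_le fun i _ => (hX.meas i).comap_le
  measurable_left := (comap_measurable (X j)).mono (comap_le_pastSigma le_rfl) le_rfl
  measurable_right := hX.meas (j + n)
  condExp_indicator := hX.cond j n

lemma condExp_strictPast_zero [IsProbabilityMeasure μ] {E : Type*} [NormedAddCommGroup E]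
    [NormedSpace ℝ E] [CompleteSpace E] (g : Ω → E) :
    μ[g | strictPast X 0] = fun _ => ∫ ω, g ω ∂μ :=
  condExp_bot g

lemma lastState_succ_add {α : Type*} (X : ∀ j, α → 𝒳 j) (j n : ℕ) :
    lastState X (j + 1 + n) = MeasurableSpace.comap (X (j + n)) inferInstance := by
  rw [Nat.add_right_comm]

theorem isContractiveMarkov_of_doeblin [IsProbabilityMeasure μ] (hX : IsInhomMarkov μ X κ)
    {n₀ : ℕ} {γ : ℝ} (hγ : γ ∈ Set.Icc (0 : ℝ) 1) {m : ∀ j, Measure (𝒳 j)}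
    (hm : ∀ j, IsProbabilityMeasure (m j))
    (hκ : ∀ j x, ENNReal.ofReal γ • m (j + n₀) ≤ κ j n₀ x) :
    IsContractiveMarkov μ (strictPast X) (lastState X) n₀ √(1 - γ) := by
  have hκ_markov := hX.isMarkovKernel
  have hker := hasCondKernel_of_isInhomMarkov hX
  have hρ : 1 - γ ≤ √(1 - γ) := Real.le_sqrt_self_iff.2 (by linarith [hγ.1])
  refine ⟨monotone_nat_of_le_succ fun k => ?_, fun k => ?_, fun k => ?_, rfl,
    fun k E _ _ _ g hg => ?_, fun k g c R hg hR => ?_, fun k g hg hg₀ => ?_⟩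
  all_goals rcases k with _ | j
  · exact bot_le
  · exact pastSigma_mono j.le_succ
  · exact bot_le
  · exact (hker j 0).le
  · exact bot_le
  · exact comap_le_pastSigma le_rfl
  · exact .rfl
  · exact (hker j 1).condExp_ae_eq_condExp_comap hg
  · obtain ⟨ω, hω⟩ := hR.exists
    refine ⟨∫ ω, g ω ∂μ, ae_of_all _ fun _ => ?_⟩
    simpa [condExp_strictPast_zero] using
      mul_nonneg (Real.sqrt_nonneg (1 - γ)) ((abs_nonneg _).trans hω)
  · obtain ⟨ω, hω⟩ := hR.exists
    obtain ⟨b, hb⟩ :=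
      (hker j n₀).exists_abs_condExp_sub_le hγ.1 (hκ j) (lastState_succ_add X j n₀ ▸ hg) hR
    exact ⟨b, hb.mono fun _ h => h.trans
      (mul_le_mul_of_nonneg_right hρ ((abs_nonneg _).trans hω))⟩
  · rw [condExp_strictPast_zero, hg₀]
    simpa using mul_nonneg (Real.sqrt_nonneg (1 - γ)) lpNorm_nonneg
  · exact (hker j n₀).lpNorm_condExp_le hγ.1 (hκ j) (lastState_succ_add X j n₀ ▸ hg) hg₀

end DoeblinChain

/-! ### Rates of normal approximation -/

section NormalApproximation

/-- The complex moment generating function of `ν` agrees with that of the standard Gaussian up to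
a relative error of order `ε * ‖z‖ ^ 3`, on the disc of radius `1 / ε`. For the law of a sum of
standard deviation `σ`, divided by `σ`, one expects `ε` to be of order `1 / σ`. -/
def HasGaussianMGFError (ν : Measure ℝ) (ε : ℝ) : Prop :=
  ∀ z : ℂ, ε * ‖z‖ ≤ 1 → ‖complexMGF id ν z - Complex.exp (z ^ 2 / 2)‖
    ≤ ‖Complex.exp (z ^ 2 / 2)‖ * (ε * ‖z‖ ^ 3 * Real.exp (ε * ‖z‖ ^ 3))

variable {ν ν' : Measure ℝ} {ε : ℝ}

namespace HasGaussianMGFError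

lemma map_neg (hν : HasGaussianMGFError ν ε) : HasGaussianMGFError (ν.map Neg.neg) ε := by
  intro z hz
  have hmgf : complexMGF id (ν.map Neg.neg) z = complexMGF id ν (-z) := by
    rw [complexMGF_id_map measurable_neg.aemeasurable]
    simp [complexMGF]
  simpa only [hmgf, neg_sq, norm_neg] using hν (-z) (by rwa [norm_neg])

lemma norm_complexMGF_sub_le (hν : HasGaussianMGFError ν ε) (hε : 0 ≤ ε) {t : ℝ}
    (ht : ε * (1 + |t|) ≤ 1 / 4) :
    ‖complexMGF id ν (1 + t * Complex.I) - Complex.exp ((1 + t * Complex.I) ^ 2 / 2)‖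
      ≤ ε * (128 * Real.exp 1 * Real.exp (-(1 / 8) * t ^ 2)) := by
  set a := ‖1 + t * Complex.I‖ with ha
  have ha_sq : a ^ 2 = 1 + t ^ 2 := by
    rw [ha, ← Complex.normSq_eq_norm_sq, Complex.normSq_apply]
    simp
    ring
  have hεa : ε * a ≤ 1 / 4 := by
    refine (mul_le_mul_of_nonneg_left ?_ hε).trans ht
    simpa using norm_add_le (1 : ℂ) (t * Complex.I)
  have hgauss : ‖Complex.exp ((1 + t * Complex.I) ^ 2 / 2)‖ = Real.exp ((1 - t ^ 2) / 2) := by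
    rw [Complex.norm_exp]
    congr 1
    simp [pow_two]
  have hcube : a ^ 3 ≤ 128 * Real.exp (a ^ 2 / 8) := by
    have ha_one : 1 ≤ a := one_le_sq_iff₀ (norm_nonneg _) |>.1 (by rw [ha_sq]; nlinarith)
    have hexp := Real.pow_div_factorial_le_exp (a ^ 2 / 8) (by positivity) 2
    calc a ^ 3 ≤ a ^ 4 := pow_le_pow_right₀ ha_one (by norm_num)
      _ = 128 * ((a ^ 2 / 8) ^ 2 / Nat.factorial 2) := by norm_num; ring
      _ ≤ _ := by gcongr
  have hexponent : ε * a ^ 3 ≤ (1 + t ^ 2) / 4 := by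
    calc ε * a ^ 3 = ε * a * a ^ 2 := by ring
      _ ≤ 1 / 4 * a ^ 2 := by gcongr
      _ = _ := by rw [ha_sq]; ring
  calc _ ≤ Real.exp ((1 - t ^ 2) / 2) * (ε * a ^ 3 * Real.exp (ε * a ^ 3)) :=
        hgauss ▸ hν _ (hεa.trans (by norm_num))
    _ ≤ Real.exp ((1 - t ^ 2) / 2)
          * (ε * (128 * Real.exp (a ^ 2 / 8)) * Real.exp ((1 + t ^ 2) / 4)) := by gcongr
    _ = ε * (128 * Real.exp (7 / 8 + -(1 / 8) * t ^ 2)) := by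
        rw [ha_sq, show (7 / 8 + -(1 / 8) * t ^ 2 : ℝ)
          = (1 - t ^ 2) / 2 + (1 + t ^ 2) / 8 + (1 + t ^ 2) / 4 by ring, Real.exp_add, Real.exp_add]
        ring
    _ ≤ _ := by
        rw [mul_assoc 128, ← Real.exp_add]
        gcongr
        norm_num

lemma integral_exp_le (hν : HasGaussianMGFError ν ε) (hε : 0 ≤ ε) (hε' : ε ≤ 1 / 4) :
    ∫ w, Real.exp w ∂ν ≤ 33 * Real.exp 1 := by
  have h := hν.norm_complexMGF_sub_le hε (t := 0) (by simpa using hε')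
  have hmgf : complexMGF id ν (1 + (0 : ℝ) * Complex.I) = (∫ w, Real.exp w ∂ν : ℝ) := by
    simp [complexMGF, ← integral_complex_ofReal]
  have hgauss : Complex.exp ((1 + (0 : ℝ) * Complex.I) ^ 2 / 2) = (Real.exp (1 / 2) : ℝ) := by
    simp
  rw [hmgf, hgauss, ← Complex.ofReal_sub, Complex.norm_real, zero_pow two_ne_zero, mul_zero,
    Real.exp_zero, mul_one] at h
  have hhalf : Real.exp (1 / 2) ≤ Real.exp 1 := Real.exp_le_exp.2 (by norm_num)
  have hε_mul : ε * (128 * Real.exp 1) ≤ 1 / 4 * (128 * Real.exp 1) := by gcongr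
  linarith [(Real.le_norm_self _).trans h]

lemma integral_norm_complexMGF_sub_le (hν : HasGaussianMGFError ν ε) (hε : 0 ≤ ε) {T : ℝ}
    (hT : 0 ≤ T) (hεT : ε * (1 + T) ≤ 1 / 4) :
    ∫ t in -T..T, ‖complexMGF id ν (1 + t * Complex.I) - Complex.exp ((1 + t * Complex.I) ^ 2 / 2)‖
      ≤ ε * (128 * Real.exp 1 * ∫ t : ℝ, Real.exp (-(1 / 8) * t ^ 2)) := by
  have hint : Integrable fun t : ℝ => ε * (128 * Real.exp 1 * Real.exp (-(1 / 8) * t ^ 2)) :=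
    ((integrable_exp_neg_mul_sq (by norm_num)).const_mul _).const_mul _
  rw [intervalIntegral.integral_of_le (by linarith), ← integral_const_mul, ← integral_const_mul]
  refine le_trans ?_ (setIntegral_le_integral (s := Set.Ioc (-T) T) hint
    (ae_of_all _ fun t => by positivity))
  refine integral_mono_of_nonneg (ae_of_all _ fun t => norm_nonneg _) hint.integrableOn
    (ae_restrict_of_forall_mem measurableSet_Ioc fun t ht => hν.norm_complexMGF_sub_le hε ?_)
  refine le_trans ?_ hεT
  gcongr
  exact abs_le.2 ⟨ht.1.le, ht.2⟩

end HasGaussianMGFError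

lemma exists_exp_mul_abs_measureReal_Ioi_sub_le_mul :
    ∃ K : ℝ, ∀ (ν : Measure ℝ) [IsFiniteMeasure ν] (ε : ℝ), HasGaussianMGFError ν ε →
      Integrable Real.exp ν → 0 < ε → ε ≤ 1 / 8 → ∀ x,
      Real.exp x * |ν.real (Set.Ioi x) - (gaussianReal 0 1).real (Set.Ioi x)| ≤ K * ε := by
  obtain ⟨C₀, hC₀, htail⟩ := exists_exp_mul_abs_measureReal_Ioi_sub_le
  set I := ∫ t : ℝ, Real.exp (-(1 / 8) * t ^ 2)
  refine ⟨C₀ * (128 * Real.exp 1 * I + 8 * (67 * Real.exp 1)), fun ν _ ε hν hexp hε hε' x => ?_⟩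
  have hεT : ε * (1 + 1 / (8 * ε)) ≤ 1 / 4 := by
    field_simp
    linarith
  refine (htail ν (1 / (8 * ε)) hexp (by positivity) x).trans ?_
  calc _ ≤ C₀ * (ε * (128 * Real.exp 1 * I)
        + (2 * (33 * Real.exp 1) + Real.exp 1) / (1 / (8 * ε))) := by
        gcongr
        · exact hν.integral_norm_complexMGF_sub_le hε.le (by positivity) hεT
        · exact hν.integral_exp_le hε.le (by linarith)
    _ = _ := by
        field_simp
        ring

theorem exists_exp_abs_mul_abs_measureReal_Ioi_sub_le :
    ∃ K : ℝ, ∀ (ν : Measure ℝ) [IsProbabilityMeasure ν] (ε : ℝ), HasGaussianMGFError ν ε →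
      Integrable (fun w => Real.exp |w|) ν → 0 < ε → ε ≤ 1 / 8 → ∀ᵐ x,
      Real.exp |x| * |ν.real (Set.Ioi x) - (gaussianReal 0 1).real (Set.Ioi x)| ≤ K * ε := by
  obtain ⟨K, hK⟩ := exists_exp_mul_abs_measureReal_Ioi_sub_le_mul
  refine ⟨K, fun ν _ ε hν hint hε hε' => ?_⟩
  have := Measure.isProbabilityMeasure_map (μ := ν) measurable_neg.aemeasurable
  have hexp : Integrable Real.exp ν :=
    hint.mono' (by fun_prop) (ae_of_all _ fun w => by simpa using le_abs_self w)
  have hexp_neg : Integrable Real.exp (ν.map Neg.neg) :=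
    (integrable_map_measure (by fun_prop) measurable_neg.aemeasurable).2
      (hint.mono' (by fun_prop) (ae_of_all _ fun w => by simpa using neg_le_abs w))
  refine ae_exp_abs_mul_abs_measureReal_Ioi_sub_le (hK ν ε hν hexp hε hε') ?_
  rw [gaussianReal_map_neg, neg_zero]
  exact hK (ν.map Neg.neg) ε hν.map_neg hexp_neg hε hε'

lemma exp_abs_mul_abs_measureReal_Ioi_sub_le [IsProbabilityMeasure ν] [IsProbabilityMeasure ν']
    (hν : Integrable (fun w => Real.exp |w|) ν) (hν' : Integrable (fun w => Real.exp |w|) ν')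
    (x : ℝ) : Real.exp |x| * |ν.real (Set.Ioi x) - ν'.real (Set.Ioi x)|
      ≤ ∫ w, Real.exp |w| ∂ν + ∫ w, Real.exp |w| ∂ν' := by
  rw [← le_div_iff₀' (Real.exp_pos _), div_eq_inv_mul, ← Real.exp_neg, mul_add]
  refine (abs_sub_le _ ((Set.Ioi x).indicator 1 0) _).trans
    (add_le_add (abs_measureReal_Ioi_sub_indicator_le hν x) ?_)
  rw [abs_sub_comm]
  exact abs_measureReal_Ioi_sub_indicator_le hν' x

lemma exists_forall_of_eventually_atTop {P : ℕ → ℝ → Prop}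
    (hmono : ∀ n a b, a ≤ b → P n a → P n b) (hex : ∀ n, ∃ K, P n K) {K₀ : ℝ}
    (hK₀ : ∀ᶠ n in atTop, P n K₀) : ∃ K, ∀ n, P n K := by
  choose k hk using hex
  obtain ⟨n₁, hn₁⟩ := eventually_atTop.1 hK₀
  obtain ⟨M, hM⟩ := ((Set.finite_lt_nat n₁).image k).bddAbove
  refine ⟨max K₀ M, fun n => ?_⟩
  rcases lt_or_ge n n₁ with hn | hn
  · exact hmono n _ _ ((hM ⟨n, hn, rfl⟩).trans (le_max_right _ _)) (hk n)
  · exact hmono n _ _ (le_max_left _ _) (hn₁ n hn)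

lemma integrable_exp_abs_gaussianReal : Integrable (fun w => Real.exp |w|) (gaussianReal 0 1) := by
  simpa using integrable_exp_mul_abs (X := id) (t := 1)
    (integrable_exp_mul_gaussianReal 1) (integrable_exp_mul_gaussianReal (-1))

theorem exists_mul_abs_integral_sub_gaussianReal_le {ν : ℕ → Measure ℝ}
    (hprob : ∀ n, IsProbabilityMeasure (ν n)) (hint : ∀ n, Integrable (fun w => Real.exp |w|) (ν n))
    {L : ℝ} (hL : 0 < L) {σ : ℕ → ℝ} (hσ₀ : ∀ n, 0 ≤ σ n) (hσ : Tendsto σ atTop atTop)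
    (hν : ∀ n, 0 < σ n → HasGaussianMGFError (ν n) (L / σ n)) :
    ∃ K : ℝ, ∀ h h' : ℝ → ℝ, AEStronglyMeasurable h' →
      (∀ y, h y - h 0 = ∫ x in (0 : ℝ)..y, h' x) →
      Integrable (fun x => |h' x| * Real.exp (-|x|)) →
      ∀ n, σ n * |∫ w, h w ∂(ν n) - ∫ w, h w ∂(gaussianReal 0 1)|
        ≤ K * ∫ x, |h' x| * Real.exp (-|x|) := by
  obtain ⟨K₀, hK₀⟩ := exists_exp_abs_mul_abs_measureReal_Ioi_sub_le
  obtain ⟨K, hK⟩ : ∃ K : ℝ, ∀ n, ∃ E, σ n * E ≤ K ∧ ∀ᵐ x, Real.exp |x|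
      * |(ν n).real (Set.Ioi x) - (gaussianReal 0 1).real (Set.Ioi x)| ≤ E := by
    refine exists_forall_of_eventually_atTop (K₀ := K₀ * L)
      (fun n a b hab ⟨E, hE, htail⟩ => ⟨E, hE.trans hab, htail⟩)
      (fun n => ⟨_, _, le_rfl, ae_of_all _ <| exp_abs_mul_abs_measureReal_Ioi_sub_le (hint n)
        integrable_exp_abs_gaussianReal⟩) ?_
    filter_upwards [hσ.eventually_ge_atTop (8 * L)] with n hn
    have hσn : 0 < σ n := by linarith
    refine ⟨K₀ * (L / σ n), by field_simp; exact le_rfl,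
      hK₀ (ν n) _ (hν n hσn) (hint n) (by positivity) ?_⟩
    rw [div_le_iff₀ hσn]
    linarith
  refine ⟨K, fun h h' hh' hFTC hH n => ?_⟩
  obtain ⟨E, hE, htail⟩ := hK n
  calc _ ≤ σ n * (E * ∫ x, |h' x| * Real.exp (-|x|)) :=
        mul_le_mul_of_nonneg_left (abs_integral_sub_integral_le (hint n)
          integrable_exp_abs_gaussianReal htail hh' hFTC hH) (hσ₀ n)
    _ ≤ _ := by
        rw [← mul_assoc]
        gcongr

end NormalApproximation

section StandardizedLaw

variable {α : Type*} {m₀ : MeasurableSpace α} {μ : Measure α} {S : α → ℝ}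

/-- The law of `S`, centred and divided by its standard deviation. When `S` has zero variance this
is, by the convention `x / 0 = 0`, the Dirac mass at `0`. -/
def standardizedLaw (μ : Measure α) (S : α → ℝ) : Measure ℝ :=
  μ.map fun ω => (S ω - ∫ ω', S ω' ∂μ) / √(variance S μ)

lemma integral_standardizedLaw (hS : AEMeasurable S μ) {h : ℝ → ℝ} (hh : Measurable h) :
    ∫ w, h w ∂(standardizedLaw μ S) = ∫ ω, h ((S ω - ∫ ω', S ω' ∂μ) / √(variance S μ)) ∂μ :=
  integral_map (by fun_prop) hh.aestronglyMeasurable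

lemma isProbabilityMeasure_standardizedLaw [IsProbabilityMeasure μ] (hS : AEMeasurable S μ) :
    IsProbabilityMeasure (standardizedLaw μ S) :=
  Measure.isProbabilityMeasure_map (by fun_prop)

lemma integrable_exp_abs_standardizedLaw [IsFiniteMeasure μ] (hS : IsBddMeasurable μ m₀ S) :
    Integrable (fun w => Real.exp |w|) (standardizedLaw μ S) := by
  have hSm := hS.stronglyMeasurable.measurable
  obtain ⟨R, hR⟩ := (hS.sub (.const (∫ ω, S ω ∂μ))).exists_norm_le
  refine (integrable_map_measure (by fun_prop) (by fun_prop)).2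
    (.of_bound (by fun_prop) (Real.exp (R / √(variance S μ))) ?_)
  filter_upwards [hR] with ω hω
  simpa [abs_div, abs_of_nonneg] using div_le_div_of_nonneg_right hω (Real.sqrt_nonneg _)

lemma complexMGF_standardizedLaw (hS : AEMeasurable S μ) (z : ℂ) :
    complexMGF id (standardizedLaw μ S) z
      = ∫ ω, Complex.exp (z / √(variance S μ) * (S ω - ∫ ω', S ω' ∂μ : ℝ)) ∂μ := by
  rw [standardizedLaw, complexMGF_id_map (by fun_prop), complexMGF]
  congr! 3 with ω
  push_cast
  ring

lemma IsContractiveMarkov.exists_hasGaussianMGFError [IsProbabilityMeasure μ]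
    {F G : ℕ → MeasurableSpace α} {N : ℕ} {ρ C : ℝ} {Y : ℕ → α → ℝ}
    (hc : IsContractiveMarkov μ F G N ρ) (hN : 0 < N) (hρ₀ : 0 ≤ ρ) (hρ : ρ < 1) (hC : 0 ≤ C)
    (hY : ∀ k, IsBddMeasurable μ (G (k + 1)) (Y k)) (hYC : ∀ k, ∀ᵐ ω ∂μ, |Y k ω| ≤ C) :
    ∃ L : ℝ, 0 < L ∧ ∀ (n : ℕ) (S : α → ℝ), AEMeasurable S μ →
      (∀ ω, S ω = ∑ k ∈ Finset.range n, Y k ω) → 0 < √(variance S μ) →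
      HasGaussianMGFError (standardizedLaw μ S) (L / √(variance S μ)) := by
  obtain ⟨L, hL, happrox⟩ := hc.exists_norm_integral_cexp_sub_le hN hρ₀ hρ hC hY hYC
  refine ⟨L, hL, fun n S hSm hS hσ z hz => ?_⟩
  set σ := √(variance S μ) with hσ_def
  have hσ_sq : variance S μ = σ ^ 2 := (Real.sq_sqrt (variance_nonneg S μ)).symm
  have hnorm : ‖z / σ‖ = ‖z‖ / σ := by rw [norm_div, Complex.norm_real, Real.norm_of_nonneg hσ.le]
  have hscale : (z / σ) ^ 2 * variance S μ / 2 = z ^ 2 / 2 := by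
    have : (σ : ℂ) ≠ 0 := by exact_mod_cast hσ.ne'
    rw [hσ_sq]
    push_cast
    field_simp
  have herror : L * ‖z / σ‖ ^ 3 * variance S μ = L / σ * ‖z‖ ^ 3 := by
    rw [hnorm, hσ_sq]
    field_simp
  rw [complexMGF_standardizedLaw hSm, ← hσ_def, ← hscale, ← herror]
  exact happrox n (z / σ) (by rwa [hnorm, ← mul_comm_div]) S hS

end StandardizedLaw

section TestFunctions

lemma exists_exp_neg_abs_le_mul_inv_one_add_rpow {s : ℝ} (hs : 0 ≤ s) :
    ∃ c : ℝ, ∀ x : ℝ, Real.exp (-|x|) ≤ c * (1 + |x| ^ s)⁻¹ := by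
  obtain ⟨N, hN⟩ := exists_nat_ge s
  refine ⟨2 + N.factorial, fun x => ?_⟩
  have hrpow : |x| ^ s ≤ 1 + |x| ^ N := by
    rcases le_total |x| 1 with hx | hx
    · exact (Real.rpow_le_one (abs_nonneg x) hx hs).trans (by simp)
    · have hle := Real.rpow_le_rpow_of_exponent_le hx hN
      rw [Real.rpow_natCast] at hle
      linarith
  have hexp : |x| ^ N ≤ N.factorial * Real.exp |x| := by
    rw [← div_le_iff₀' (by positivity)]
    exact Real.pow_div_factorial_le_exp _ (abs_nonneg x) N
  rw [← div_eq_mul_inv, le_div_iff₀ (by positivity), Real.exp_neg,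
    inv_mul_le_iff₀ (Real.exp_pos _)]
  linarith [Real.one_le_exp (abs_nonneg x)]

lemma continuous_of_sub_eq_intervalIntegral {h h' : ℝ → ℝ}
    (hint : ∀ x y, IntervalIntegrable h' volume x y)
    (hFTC : ∀ x y, h y - h x = ∫ t in x..y, h' t) : Continuous h := by
  have hprim : h = fun y => h 0 + ∫ t in (0 : ℝ)..y, h' t := by
    ext y
    rw [← hFTC, add_sub_cancel]
  rw [hprim]
  exact continuous_const.add (intervalIntegral.continuous_primitive hint 0)

lemma aestronglyMeasurable_of_intervalIntegrable {h' : ℝ → ℝ}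
    (hint : ∀ x y, IntervalIntegrable h' volume x y) : AEStronglyMeasurable h' :=
  (aecover_Ioc (tendsto_neg_atTop_atBot.comp tendsto_natCast_atTop_atTop)
    (tendsto_natCast_atTop_atTop (R := ℝ))).aestronglyMeasurable
    fun n : ℕ => (hint (-n) n).1.aestronglyMeasurable

lemma exists_integral_abs_mul_exp_neg_abs_le {s : ℝ} (hs : 0 ≤ s) :
    ∃ c : ℝ, ∀ h' : ℝ → ℝ, AEStronglyMeasurable h' →
      Integrable (fun x => |h' x| / (1 + |x| ^ s)) →
      Integrable (fun x => |h' x| * Real.exp (-|x|)) ∧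
        ∫ x, |h' x| * Real.exp (-|x|) ≤ c * ∫ x, |h' x| / (1 + |x| ^ s) := by
  obtain ⟨c, hc⟩ := exists_exp_neg_abs_le_mul_inv_one_add_rpow hs
  refine ⟨c, fun h' hh' hH => ?_⟩
  have hle (x : ℝ) : |h' x| * Real.exp (-|x|) ≤ c * (|h' x| / (1 + |x| ^ s)) := by
    rw [div_eq_mul_inv, mul_left_comm]
    gcongr
    exact hc x
  have hint : Integrable fun x => |h' x| * Real.exp (-|x|) :=
    (hH.const_mul c).mono' (hh'.norm.mul (by fun_prop))
      (ae_of_all _ fun x => by simpa [abs_mul] using hle x)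
  refine ⟨hint, ?_⟩
  rw [← integral_const_mul]
  exact integral_mono hint (hH.const_mul c) hle

end TestFunctions

end DoeblinCLT

open DoeblinCLT in
theorem smooth_CLT_rate_doeblin_general
    (μ : Measure Ω) [IsProbabilityMeasure μ]
    (X : ∀ j, Ω → 𝒳 j) (κ : ∀ j n, Kernel (𝒳 j) (𝒳 (j + n)))
    (hMarkov : IsInhomMarkov μ X κ)
    (n₀ : ℕ) (hn₀ : 0 < n₀) (γ : ℝ) (hγ : γ ∈ Set.Ioc (0 : ℝ) 1)
    (m : ∀ j, Measure (𝒳 j)) (hm : ∀ j, IsProbabilityMeasure (m j))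
    (hDoeblin : ∀ j x, ENNReal.ofReal γ • m (j + n₀) ≤ κ j n₀ x)
    (f : ∀ j, 𝒳 j → ℝ) (hfmeas : ∀ j, Measurable (f j))
    (C : ℝ) (hbdd : ∀ j, ∀ᵐ ω ∂μ, |f j (X j ω)| ≤ C)
    (S : ℕ → Ω → ℝ) (hS : ∀ n ω, S n ω = ∑ j ∈ Finset.range n, f j (X j ω))
    (σs : ℕ → ℝ) (hσ : ∀ n, σs n = Real.sqrt (variance (S n) μ))
    (hσ_top : Tendsto σs atTop atTop) :
    ∃ K : ℝ, ∀ h h' : ℝ → ℝ,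
      (∀ x y : ℝ, IntervalIntegrable h' volume x y) →
      (∀ x y : ℝ, h y - h x = ∫ t in x..y, h' t) →
      Integrable (fun x => |h' x| * Real.exp (-|x|)) volume →
      ∀ n : ℕ,
        σs n * |(∫ ω, h ((S n ω - ∫ ω', S n ω' ∂μ) / σs n) ∂μ)
            - ∫ x, h x ∂(gaussianReal 0 1)|
          ≤ K * ∫ x, |h' x| * Real.exp (-|x|) := by
  have hc := isContractiveMarkov_of_doeblin hMarkov ⟨hγ.1.le, hγ.2⟩ hm hDoeblin
  have hρ : √(1 - γ) < 1 := (Real.sqrt_lt' one_pos).2 (by linarith [hγ.1])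
  obtain ⟨ω, hω⟩ := (hbdd 0).exists
  have hY (k : ℕ) : IsBddMeasurable μ (lastState X (k + 1)) fun ω => f k (X k ω) :=
    ⟨((hfmeas k).comp (comap_measurable (X k))).stronglyMeasurable, C, hbdd k⟩
  have hSb (n : ℕ) : IsBddMeasurable μ inferInstance (S n) := by
    rw [funext (hS n)]
    exact .sum _ fun k _ => (hY k).mono (hc.present_le _)
  have hSm (n : ℕ) : AEMeasurable (S n) μ := (hSb n).stronglyMeasurable.measurable.aemeasurable
  obtain ⟨L, hL, hmgf⟩ := hc.exists_hasGaussianMGFError hn₀ (Real.sqrt_nonneg _) hρ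
    ((abs_nonneg _).trans hω) hY hbdd
  obtain rfl : σs = fun n => √(variance (S n) μ) := funext hσ
  obtain ⟨K, hK⟩ := exists_mul_abs_integral_sub_gaussianReal_le
    (fun n => isProbabilityMeasure_standardizedLaw (hSm n))
    (fun n => integrable_exp_abs_standardizedLaw (hSb n)) hL (fun n => Real.sqrt_nonneg _) hσ_top
    fun n => hmgf n (S n) (hSm n) (hS n)
  refine ⟨K, fun h h' hint hFTC hH n => ?_⟩
  have hh := continuous_of_sub_eq_intervalIntegral hint hFTC
  rw [← integral_standardizedLaw (hSm n) hh.measurable]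
  exact hK h h' (aestronglyMeasurable_of_intervalIntegrable hint) (hFTC 0) hH n

/-- **Theorem (CLT rates for smooth test functions, Doeblin case).**
If `σ_n → ∞`, then for every `1 ≤ s < ∞` there is a constant `C_s` such that for every
absolutely continuous `h : ℝ → ℝ` (with derivative `h'` in the sense of the fundamental
theorem of calculus) satisfying `H_s(h) = ∫ |h'(x)|/(1+|x|^s) dx < ∞` one has
`|E[h((S_n − E S_n)/σ_n)] − ∫ h dΦ| ≤ C_s H_s(h) σ_n⁻¹` for all `n`. -/
theorem smooth_CLT_rate_doeblin
    (μ : Measure Ω) [IsProbabilityMeasure μ]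
    (X : ∀ j, Ω → 𝒳 j) (κ : ∀ j n, Kernel (𝒳 j) (𝒳 (j + n)))
    (hMarkov : IsInhomMarkov μ X κ)
    (n₀ : ℕ) (hn₀ : 0 < n₀) (γ : ℝ) (hγ : γ ∈ Set.Ioo (0 : ℝ) 1)
    (m : ∀ j, Measure (𝒳 j)) (hm : ∀ j, IsProbabilityMeasure (m j))
    (hDoeblin : ∀ j (x : 𝒳 j) (Γ : Set (𝒳 (j + n₀))), MeasurableSet Γ →
      ENNReal.ofReal γ * m (j + n₀) Γ ≤ κ j n₀ x Γ)
    (f : ∀ j, 𝒳 j → ℝ) (hfmeas : ∀ j, Measurable (f j))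
    (C : ℝ) (hbdd : ∀ j, ∀ᵐ ω ∂μ, |f j (X j ω)| ≤ C)
    (S : ℕ → Ω → ℝ) (hS : ∀ n ω, S n ω = ∑ j ∈ Finset.range n, f j (X j ω))
    (σs : ℕ → ℝ) (hσ : ∀ n, σs n = Real.sqrt (variance (S n) μ))
    (hσ_top : Tendsto σs atTop atTop) :
    ∀ s : ℝ, 1 ≤ s → ∃ Cs : ℝ, ∀ h h' : ℝ → ℝ,
      Measurable h' →
      (∀ x y : ℝ, IntervalIntegrable h' volume x y) →
      -- `h` is absolutely continuous with a.e. derivative `h'`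
      (∀ x y : ℝ, h y - h x = ∫ t in x..y, h' t) →
      Integrable (fun x => |h' x| / (1 + |x| ^ s)) volume →
      ∀ n : ℕ,
        σs n * |(∫ ω, h ((S n ω - ∫ ω', S n ω' ∂μ) / σs n) ∂μ)
            - ∫ x, h x ∂(gaussianReal 0 1)|
          ≤ Cs * ∫ x, |h' x| / (1 + |x| ^ s) := by
  intro s hs
  obtain ⟨K, hK⟩ := smooth_CLT_rate_doeblin_general μ X κ hMarkov n₀ hn₀ γ ⟨hγ.1, hγ.2.le⟩ m hm
    (fun j x => Measure.le_iff.2 (hDoeblin j x)) f hfmeas C hbdd S hS σs hσ hσ_top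
  obtain ⟨c, hc⟩ := DoeblinCLT.exists_integral_abs_mul_exp_neg_abs_le (zero_le_one.trans hs)
  refine ⟨|K| * c, fun h h' hh' hint hFTC hH n => ?_⟩
  obtain ⟨hexp, hle⟩ := hc h' hh'.aestronglyMeasurable hH
  refine (hK h h' hint hFTC hexp n).trans ?_
  rw [mul_assoc]
  gcongr
  exact le_abs_self K

end
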